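/- arXiv:0907.5224 — 3 statements merged into one kernel-verified Lean document; each statement's English description precedes it below -/
import Mathlib

section
/- The number of genus-zero Hurwitz covers of the projective line with profile a single part (k), counted with automorphism weights, equals k^{k-3}; that is, h_{0,(k)} = k^{k-3} for every positive integer k. -/
open Equiv

/-- The number of Hurwitz factorizations of the identity in `S_d` into `r` transpositions
and one permutation of cycle type (including fixed points) given by the multiset `μ`,
generating a transitive subgroup.  By monodromy, the Hurwitz number `h_{g,μ}` equals
this count divided by `d!`, where `r = 2g - 2 + ℓ(μ) + |μ|`. -/
noncomputable def hurwitzCount (d r : ℕ) (μ : Multiset ℕ) : ℕ :=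
  Nat.card {p : (Fin r → Perm (Fin d)) × Perm (Fin d) //
    (∀ i, (p.1 i).IsSwap) ∧
    (Equiv.Perm.partition p.2).parts = μ ∧
    (List.ofFn p.1).prod * p.2 = 1 ∧
    (∀ a b : Fin d, ∃ g ∈ Subgroup.closure (Set.range p.1 ∪ {p.2}), g a = b)}

/-- The Hurwitz number `h_{g,μ}`: the weighted (by `1/|Aut f|`) count of topological
types of genus-`g` covers of `ℙ¹` with profile `μ` over `∞` and
`r = 2g - 2 + ℓ(μ) + |μ|` simple ramification points, expressed via monodromy
factorizations. -/
noncomputable def hurwitzNumber (g : ℕ) (μ : Multiset ℕ) : ℚ :=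
  (hurwitzCount μ.sum (2 * g + Multiset.card μ + μ.sum - 2) μ : ℚ) /
    (Nat.factorial μ.sum : ℚ)

/-!
Fix a finite set of size `N` and a permutation `σ` of it with `n + 1` cycles, and let `F σ` be the
number of `n`-tuples of transpositions whose product turns `σ` into a single cycle. Then
`N * F σ = (product of the cycle lengths of σ) * N ^ n * n!`. This follows by induction on `n` from
the choice of the first transposition. One that swaps two points of the same cycle does not lower
the number of cycles and so contributes nothing. One that swaps points of cycles of lengths `p` and
`q` joins them, which multiplies the product of the cycle lengths by `(p + q) / (p * q)`, that is
by `1/p + 1/q`; these factors add up to `2 * N * n` over all ordered pairs of points in different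
cycles.

For `σ = 1` and `N = k` this is the count `k ^ (k - 2) * (k - 1)!`, due to Dénes, of the
`(k - 1)`-tuples of transpositions whose product is a `k`-cycle, and dividing by `k!` gives the
Hurwitz number.
-/

open Finset Equiv.Perm

section SameCycle

variable {α : Type*} {σ : Perm α} {x y a b : α}

theorem sameCycle_setoid_le_iff {s : Setoid α} : SameCycle.setoid σ ≤ s ↔ ∀ z, s z (σ z) := by
  refine ⟨fun h z ↦ h (sameCycle_apply_right.2 .rfl), fun h a b hab ↦ ?_⟩
  obtain ⟨i, rfl⟩ := hab
  induction i with
  | zero => exact s.refl a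
  | succ i ih => rw [add_comm, zpow_one_add, mul_apply]; exact s.trans ih (h _)
  | pred i ih =>
    refine s.trans ih (s.symm ?_)
    simpa [← mul_apply, ← zpow_one_add] using h ((σ ^ (-(i : ℤ) - 1)) a)

variable [DecidableEq α]

theorem sameCycle_of_sameCycle_mul_swap (h : σ.SameCycle x y)
    (hab : (σ * swap x y).SameCycle a b) : σ.SameCycle a b := by
  refine sameCycle_setoid_le_iff (s := SameCycle.setoid σ) |>.2 (fun z ↦ ?_) hab
  change σ.SameCycle z _
  rw [mul_apply, sameCycle_apply_right]
  rcases eq_or_ne z x with rfl | hzx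
  · rwa [swap_apply_left]
  rcases eq_or_ne z y with rfl | hzy
  · rw [swap_apply_right]; exact h.symm
  · rw [swap_apply_of_ne_of_ne hzx hzy]

variable [Finite α]

theorem sameCycle_mul_swap_self (h : ¬ σ.SameCycle x y) : (σ * swap x y).SameCycle x y := by
  by_contra hxy
  -- `σ * swap x y` sends `x` to `σ y` and then follows the `σ`-orbit of `y` all the way round.
  have orbit (n : ℕ) : (σ * swap x y).SameCycle x ((σ ^ (n + 1)) y) := by
    induction n with
    | zero => simpa using sameCycle_apply_right.2 (SameCycle.refl (σ * swap x y) x)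
    | succ n ih =>
      have hx : (σ ^ (n + 1)) y ≠ x := fun hn ↦ h (hn ▸ sameCycle_pow_left.2 .rfl)
      have hy : (σ ^ (n + 1)) y ≠ y := fun hn ↦ hxy (by rwa [hn] at ih)
      have step : (σ ^ (n + 1 + 1)) y = (σ * swap x y) ((σ ^ (n + 1)) y) := by
        rw [mul_apply, swap_apply_of_ne_of_ne hx hy, pow_succ' σ (n + 1), mul_apply]
      rwa [step, sameCycle_apply_right]
  have return_to_y := orbit (orderOf σ - 1)
  rw [Nat.sub_add_cancel (orderOf_pos σ), pow_orderOf_eq_one] at return_to_y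
  exact hxy return_to_y

theorem sameCycle_mul_swap_of_sameCycle (h : ¬ σ.SameCycle x y) (hab : σ.SameCycle a b) :
    (σ * swap x y).SameCycle a b :=
  sameCycle_of_sameCycle_mul_swap (sameCycle_mul_swap_self h) (by simpa [mul_assoc] using hab)

theorem sameCycle_mul_swap_iff (h : ¬ σ.SameCycle x y) :
    (σ * swap x y).SameCycle a b ↔
      σ.SameCycle a b ∨
        (σ.SameCycle x a ∨ σ.SameCycle y a) ∧ (σ.SameCycle x b ∨ σ.SameCycle y b) := by
  constructor
  · let reach (z : α) : Prop := σ.SameCycle a z ∨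
      (σ.SameCycle x a ∨ σ.SameCycle y a) ∧ (σ.SameCycle x z ∨ σ.SameCycle y z)
    have reach_swap (z : α) : reach z ↔ reach (swap x y z) := by
      have reach_x_iff_reach_y : reach x ↔ reach y := by
        simp only [reach, SameCycle.rfl, sameCycle_comm (x := a)]
        tauto
      grind
    have reach_apply (z : α) : reach z ↔ reach ((σ * swap x y) z) := by
      simpa [reach] using reach_swap z
    intro hab
    have reach_eq : reach a = reach b := sameCycle_setoid_le_iff (s := Setoid.ker reach) |>.2
      (fun z ↦ propext (reach_apply z)) hab
    exact reach_eq.mp (.inl .rfl)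
  · have connected {c} (hc : σ.SameCycle x c ∨ σ.SameCycle y c) : (σ * swap x y).SameCycle x c :=
      hc.elim (sameCycle_mul_swap_of_sameCycle h) fun hyc ↦
        (sameCycle_mul_swap_self h).trans (sameCycle_mul_swap_of_sameCycle h hyc)
    rintro (hab | ⟨ha, hb⟩)
    · exact sameCycle_mul_swap_of_sameCycle h hab
    · exact (connected ha).symm.trans (connected hb)

end SameCycle

section Finpartition

variable {α : Type*} [DecidableEq α] {s : Finset α} (P : Finpartition s)

theorem part_union_part_notMem_parts {a b : α} (ha : a ∈ s) (hb : b ∈ s)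
    (hne : P.part a ≠ P.part b) : P.part a ∪ P.part b ∉ P.parts := by
  intro hmem
  have part_eq {z} (hz : z ∈ P.part a ∪ P.part b) := P.part_eq_of_mem hmem hz
  refine hne ((part_eq ?_).trans (part_eq ?_).symm) <;> simp [ha, hb]

variable (K : Type*) [DivisionRing K] [CharZero K]

theorem sum_inv_card_part : ∑ a ∈ s, (#(P.part a) : K)⁻¹ = #P.parts := by
  rw [← sum_fiberwise_of_maps_to (t := P.parts) fun a ha ↦ P.part_mem.2 ha, card_eq_sum_ones,
    Nat.cast_sum]
  refine sum_congr rfl fun t ht ↦ ?_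
  have fiber : {a ∈ s | P.part a = t} = t := by
    ext a
    rw [mem_filter, P.part_eq_iff_mem ht, and_iff_right_of_imp (P.subset ht ·)]
  have ht' : (#t : K) ≠ 0 := by simpa using P.ne_empty ht
  rw [sum_congr rfl fun a ha ↦ by rw [(mem_filter.1 ha).2], fiber, sum_const, nsmul_eq_mul,
    mul_inv_cancel₀ ht', Nat.cast_one]

theorem sum_inv_card_part_of_notMem :
    ∑ a ∈ s, ∑ _b ∈ s \ P.part a, (#(P.part a) : K)⁻¹ = #s * (#P.parts - 1) := by
  have inner (a) (ha : a ∈ s) :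
      ∑ _b ∈ s \ P.part a, (#(P.part a) : K)⁻¹ = #s * (#(P.part a) : K)⁻¹ - 1 := by
    have hpart : (#(P.part a) : K) ≠ 0 := by simpa using ha
    rw [sum_const, nsmul_eq_mul, cast_card_sdiff (P.part_subset a), sub_mul, mul_inv_cancel₀ hpart]
  rw [sum_congr rfl inner, sum_sub_distrib, ← mul_sum, sum_inv_card_part]
  simp [mul_sub]

theorem sum_inv_card_part_add_inv_card_part :
    ∑ a ∈ s, ∑ b ∈ s \ P.part a, ((#(P.part a) : K)⁻¹ + (#(P.part b) : K)⁻¹) =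
      2 * (#s * (#P.parts - 1)) := by
  have symm : ∑ a ∈ s, ∑ b ∈ s \ P.part a, (#(P.part b) : K)⁻¹ =
      ∑ b ∈ s, ∑ _a ∈ s \ P.part b, (#(P.part b) : K)⁻¹ :=
    sum_comm' fun a b ↦ by grind [P.mem_part_iff_part_eq_part]
  rw [two_mul, ← sum_inv_card_part_of_notMem]
  simp only [sum_add_distrib, symm]

end Finpartition

section CyclePartition

variable {α : Type*} [Fintype α] [DecidableEq α] {σ : Perm α} {x y : α}

instance decidableRelSameCycleSetoid (σ : Perm α) : DecidableRel (SameCycle.setoid σ) :=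
  instDecidableRelSameCycle σ

/-- The partition of `α` into the cycles of `σ`, each fixed point being a cycle of length `1`.
It refines `Equiv.Perm.partition`, which only records the lengths of the cycles. -/
def cyclePartition (σ : Perm α) : Finpartition (univ : Finset α) :=
  Finpartition.ofSetoid (SameCycle.setoid σ)

theorem part_mem_parts_cyclePartition (σ : Perm α) (x : α) :
    (cyclePartition σ).part x ∈ (cyclePartition σ).parts :=
  (cyclePartition σ).part_mem.2 (mem_univ x)

theorem mem_part_cyclePartition : y ∈ (cyclePartition σ).part x ↔ σ.SameCycle x y :=
  Finpartition.mem_part_ofSetoid_iff_rel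

theorem part_cyclePartition_eq_part_iff :
    (cyclePartition σ).part x = (cyclePartition σ).part y ↔ σ.SameCycle x y := by
  rw [← Finpartition.mem_part_iff_part_eq_part _ (mem_univ x) (mem_univ y),
    mem_part_cyclePartition, sameCycle_comm]

theorem cyclePartition_one : cyclePartition (1 : Perm α) = ⊥ := by
  refine le_antisymm (fun c hc ↦ ?_) bot_le
  obtain ⟨z, -, rfl⟩ := (cyclePartition (1 : Perm α)).part_surjOn hc
  refine ⟨{z}, by simp, fun w hw ↦ ?_⟩
  simpa [eq_comm] using mem_part_cyclePartition.1 hw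

theorem isCycleOn_univ_iff_card_parts_le_one :
    σ.IsCycleOn Set.univ ↔ #(cyclePartition σ).parts ≤ 1 := by
  rw [card_le_one]
  constructor
  · rintro h c hc d hd
    obtain ⟨a, -, rfl⟩ := (cyclePartition σ).part_surjOn hc
    obtain ⟨b, -, rfl⟩ := (cyclePartition σ).part_surjOn hd
    exact part_cyclePartition_eq_part_iff.2 (h.2 trivial trivial)
  · exact fun h ↦ ⟨Set.bijOn_univ.2 σ.bijective, fun a _ b _ ↦ part_cyclePartition_eq_part_iff.1 <|
      h _ (part_mem_parts_cyclePartition σ a) _ (part_mem_parts_cyclePartition σ b)⟩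

theorem cyclePartition_mul_swap_le (h : σ.SameCycle x y) :
    cyclePartition (σ * swap x y) ≤ cyclePartition σ := by
  intro c hc
  obtain ⟨z, -, rfl⟩ := (cyclePartition (σ * swap x y)).part_surjOn hc
  refine ⟨_, part_mem_parts_cyclePartition σ z, fun w hw ↦ ?_⟩
  exact mem_part_cyclePartition.2 (sameCycle_of_sameCycle_mul_swap h (mem_part_cyclePartition.1 hw))

theorem part_cyclePartition_mul_swap (h : ¬ σ.SameCycle x y) (z : α) :
    (cyclePartition (σ * swap x y)).part z =
      if σ.SameCycle x z ∨ σ.SameCycle y z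
      then (cyclePartition σ).part x ∪ (cyclePartition σ).part y
      else (cyclePartition σ).part z := by
  ext w
  rw [mem_part_cyclePartition, sameCycle_mul_swap_iff h]
  split_ifs with hz
  · simp only [mem_union, mem_part_cyclePartition, hz, true_and, or_iff_right_iff_imp]
    exact fun hzw ↦ hz.imp (·.trans hzw) (·.trans hzw)
  · simp [mem_part_cyclePartition, hz]

theorem pair_part_subset_parts_cyclePartition (σ : Perm α) (x y : α) :
    {(cyclePartition σ).part x, (cyclePartition σ).part y} ⊆ (cyclePartition σ).parts := by
  simp [insert_subset_iff]

theorem parts_cyclePartition_mul_swap (h : ¬ σ.SameCycle x y) :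
    (cyclePartition (σ * swap x y)).parts =
      insert ((cyclePartition σ).part x ∪ (cyclePartition σ).part y)
        ((cyclePartition σ).parts \ {(cyclePartition σ).part x, (cyclePartition σ).part y}) := by
  ext c
  simp only [mem_insert, mem_sdiff, mem_singleton, not_or]
  constructor
  · intro hc
    obtain ⟨z, -, rfl⟩ := (cyclePartition (σ * swap x y)).part_surjOn hc
    rw [part_cyclePartition_mul_swap h]
    split_ifs with hz
    · exact .inl rfl
    · simp only [part_cyclePartition_eq_part_iff, part_mem_parts_cyclePartition,
        sameCycle_comm (x := z)]
      tauto
  · rintro (rfl | ⟨hc, hcx, hcy⟩)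
    · simpa [part_cyclePartition_mul_swap h, SameCycle.rfl] using
        part_mem_parts_cyclePartition (σ * swap x y) x
    · obtain ⟨z, -, rfl⟩ := (cyclePartition σ).part_surjOn hc
      rw [part_cyclePartition_eq_part_iff, sameCycle_comm] at hcx hcy
      simpa [part_cyclePartition_mul_swap h, hcx, hcy] using
        part_mem_parts_cyclePartition (σ * swap x y) z

theorem card_parts_cyclePartition_mul_swap_add_one (h : ¬ σ.SameCycle x y) :
    #(cyclePartition (σ * swap x y)).parts + 1 = #(cyclePartition σ).parts := by
  have hne := part_cyclePartition_eq_part_iff.not.2 h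
  have hsub := pair_part_subset_parts_cyclePartition σ x y
  have hunion := part_union_part_notMem_parts _ (mem_univ x) (mem_univ y) hne
  rw [parts_cyclePartition_mul_swap h, card_insert_of_notMem (by simp [hunion]),
    ← card_sdiff_add_card_eq_card hsub, card_pair hne]

theorem prod_card_parts_cyclePartition_mul_swap (K : Type*) [Field K] [CharZero K]
    (h : ¬ σ.SameCycle x y) :
    ∏ c ∈ (cyclePartition (σ * swap x y)).parts, (#c : K) =
      (∏ c ∈ (cyclePartition σ).parts, (#c : K)) *
        ((#((cyclePartition σ).part x) : K)⁻¹ + (#((cyclePartition σ).part y) : K)⁻¹) := by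
  have hne := part_cyclePartition_eq_part_iff.not.2 h
  have hsub := pair_part_subset_parts_cyclePartition σ x y
  have hunion := part_union_part_notMem_parts _ (mem_univ x) (mem_univ y) hne
  have hdisj : Disjoint ((cyclePartition σ).part x) ((cyclePartition σ).part y) :=
    (cyclePartition σ).disjoint (part_mem_parts_cyclePartition σ x)
      (part_mem_parts_cyclePartition σ y) hne
  have hx : (#((cyclePartition σ).part x) : K) ≠ 0 := by simp
  have hy : (#((cyclePartition σ).part y) : K) ≠ 0 := by simp
  rw [parts_cyclePartition_mul_swap h, prod_insert (by simp [hunion]),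
    card_union_of_disjoint hdisj, ← prod_sdiff hsub, prod_pair hne]
  push_cast
  field_simp
  ring

end CyclePartition

section FullCycle

theorem partition_parts_eq_singleton_card_iff {α : Type*} [Fintype α] [DecidableEq α] [Nonempty α]
    {σ : Perm α} : σ.partition.parts = {Fintype.card α} ↔ σ.IsCycleOn Set.univ := by
  rcases subsingleton_or_nontrivial α with hα | hα
  · have : Fintype.card α = 1 :=
      le_antisymm (Fintype.card_le_one_iff_subsingleton.2 hα) Fintype.card_pos
    simp [parts_partition, Subsingleton.elim σ 1, this, isCycleOn_of_subsingleton]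
  constructor
  · intro h
    have hct : σ.cycleType = {Fintype.card α} := by
      simp [← filter_parts_partition_eq_cycleType, h, Multiset.filter_singleton,
        Fintype.one_lt_card]
    have hcycle : σ.IsCycle := card_cycleType_eq_one.1 (by simp [hct])
    have hsupp : σ.support = univ := card_eq_iff_eq_univ _ |>.1 (by simp [← sum_cycleType, hct])
    convert hcycle.isCycleOn
    ext z
    simp [← mem_support, hsupp]
  · intro h
    have hmoves (z) : σ z ≠ z := h.apply_ne Set.nontrivial_univ trivial
    have hcycle : σ.IsCycle := isCycle_iff_exists_isCycleOn.2 ⟨_, Set.nontrivial_univ, h, by simp⟩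
    have hsupp : σ.support = univ := by ext; simp [hmoves]
    simp [parts_partition, hcycle.cycleType, hsupp]

theorem sum_swap_eq_two_nsmul_sum_isSwap {α M : Type*} [Fintype α] [DecidableEq α]
    [AddCommMonoid M] [DecidablePred fun s : Perm α ↦ s.IsSwap] (f : Perm α → M) :
    ∑ x, ∑ y ∈ {x}ᶜ, f (swap x y) = 2 • ∑ s : Perm α with s.IsSwap, f s := by
  have swap_of_apply_ne {s : Perm α} (hs : s.IsSwap) {x} (hx : s x ≠ x) : swap x (s x) = s := by
    refine (hs.isCycle.eq_swap_of_apply_apply_eq_self hx ?_).symm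
    obtain ⟨a, b, -, rfl⟩ := hs
    simp
  calc ∑ x, ∑ y ∈ {x}ᶜ, f (swap x y)
      = ∑ x, ∑ s : Perm α with s.IsSwap ∧ s x ≠ x, f s := by
        refine sum_congr rfl fun x _ ↦ sum_bij' (fun y _ ↦ swap x y) (fun s _ ↦ s x) ?_ ?_ ?_ ?_ ?_
        · simp +contextual [swap_isSwap_iff, eq_comm]
        · simp
        · simp
        · simp +contextual [swap_of_apply_ne]
        · simp
    _ = ∑ s : Perm α with s.IsSwap, ∑ _x ∈ s.support, f s := sum_comm' (by simp [and_comm])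
    _ = ∑ s : Perm α with s.IsSwap, 2 • f s := by
        refine sum_congr rfl fun s hs ↦ ?_
        rw [sum_const, card_support_eq_two.2 (mem_filter.1 hs).2]
    _ = 2 • ∑ s : Perm α with s.IsSwap, f s := (smul_sum ..).symm

variable {α : Type*} [DecidableEq α] {σ : Perm α} {n : ℕ}

/-- `fullCycleCompletions n σ` is the number of `n`-tuples of transpositions whose product,
multiplied by `σ` on the left, is a single cycle through all of `α`. -/
noncomputable def fullCycleCompletions (n : ℕ) (σ : Perm α) : ℕ :=
  Nat.card {t : Fin n → Perm α //
    (∀ i, (t i).IsSwap) ∧ (σ * (List.ofFn t).prod).IsCycleOn Set.univ}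

theorem fullCycleCompletions_zero [Decidable (σ.IsCycleOn Set.univ)] :
    fullCycleCompletions 0 σ = if σ.IsCycleOn Set.univ then 1 else 0 := by
  split_ifs with h <;> simp [fullCycleCompletions, h]

variable [Fintype α]

theorem fullCycleCompletions_succ [DecidablePred fun s : Perm α ↦ s.IsSwap] :
    fullCycleCompletions (n + 1) σ =
      ∑ s : Perm α with s.IsSwap, fullCycleCompletions n (σ * s) := by
  simp_rw [fullCycleCompletions]
  rw [← sum_subtype_eq_sum_filter, subtype_univ, ← Nat.card_sigma]
  refine Nat.card_congr ⟨fun t ↦ ⟨⟨t.1 0, t.2.1 0⟩, Fin.tail t.1, fun i ↦ t.2.1 i.succ, ?_⟩,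
    fun p ↦ ⟨Fin.cons p.1.1 p.2.1, ?_⟩, fun t ↦ ?_, fun p ↦ ?_⟩
  · simpa [List.ofFn_succ, mul_assoc, Fin.tail_def] using t.2.2
  · exact ⟨Fin.cases p.1.2 p.2.2.1, by simpa [List.ofFn_succ, mul_assoc] using p.2.2.2⟩
  · simp
  · rfl

theorem fullCycleCompletions_eq_zero (h : n + 1 < #(cyclePartition σ).parts) :
    fullCycleCompletions n σ = 0 := by
  classical
  induction n generalizing σ with
  | zero => simp [fullCycleCompletions_zero, isCycleOn_univ_iff_card_parts_le_one, h]
  | succ n ih =>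
    rw [fullCycleCompletions_succ]
    refine sum_eq_zero fun s hs ↦ ih ?_
    obtain ⟨x, y, -, rfl⟩ := (mem_filter.1 hs).2
    by_cases hxy : σ.SameCycle x y
    · exact (Nat.lt_of_succ_lt h).trans_le
        (Finpartition.card_mono (cyclePartition_mul_swap_le hxy))
    · have := card_parts_cyclePartition_mul_swap_add_one hxy
      omega

theorem two_mul_fullCycleCompletions_succ (h : n + 1 < #(cyclePartition σ).parts) :
    2 * fullCycleCompletions (n + 1) σ =
      ∑ x, ∑ y ∈ univ \ (cyclePartition σ).part x, fullCycleCompletions n (σ * swap x y) := by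
  classical
  rw [fullCycleCompletions_succ, ← smul_eq_mul,
    ← sum_swap_eq_two_nsmul_sum_isSwap fun s ↦ fullCycleCompletions n (σ * s)]
  refine sum_congr rfl fun x _ ↦ (sum_subset_zero_on_sdiff ?_ ?_ fun _ _ ↦ rfl).symm
  · intro y hy
    rw [mem_compl, mem_singleton]
    rintro rfl
    simp at hy
  · intro y hy
    have hxy : σ.SameCycle x y := by simpa [mem_part_cyclePartition] using (mem_sdiff.1 hy).2
    exact fullCycleCompletions_eq_zero <|
      h.trans_le (Finpartition.card_mono (cyclePartition_mul_swap_le hxy))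

theorem card_mul_fullCycleCompletions (h : #(cyclePartition σ).parts = n + 1) :
    Fintype.card α * fullCycleCompletions n σ =
      (∏ c ∈ (cyclePartition σ).parts, #c) * Fintype.card α ^ n * n.factorial := by
  classical
  qify
  induction n generalizing σ with
  | zero =>
    have hσ : σ.IsCycleOn Set.univ := isCycleOn_univ_iff_card_parts_le_one.2 h.le
    obtain ⟨c, hc⟩ := card_eq_one.1 h
    have hcard : #c = Fintype.card α := by simpa [hc] using (cyclePartition σ).sum_card_parts
    simp [fullCycleCompletions_zero, hσ, hc, hcard]
  | succ n ih =>
    set W : ℚ := ∏ c ∈ (cyclePartition σ).parts, (#c : ℚ)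
    set N : ℚ := (Fintype.card α : ℚ)
    let len (x : α) : ℚ := #((cyclePartition σ).part x)
    have merge (x y : α) (hy : y ∈ univ \ (cyclePartition σ).part x) :
        N * fullCycleCompletions n (σ * swap x y) =
          W * N ^ n * n.factorial * ((len x)⁻¹ + (len y)⁻¹) := by
      have hxy : ¬ σ.SameCycle x y := by simpa [mem_part_cyclePartition] using hy
      have hcard := card_parts_cyclePartition_mul_swap_add_one hxy
      rw [ih (by omega), prod_card_parts_cyclePartition_mul_swap ℚ hxy]
      ring
    refine mul_left_cancel₀ (two_ne_zero' ℚ) ?_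
    calc 2 * (N * fullCycleCompletions (n + 1) σ)
        = N * (2 * fullCycleCompletions (n + 1) σ : ℕ) := by push_cast; ring
      _ = ∑ x, ∑ y ∈ univ \ (cyclePartition σ).part x,
            N * fullCycleCompletions n (σ * swap x y) := by
          rw [two_mul_fullCycleCompletions_succ (by omega)]
          simp only [Nat.cast_sum, mul_sum]
      _ = ∑ x, ∑ y ∈ univ \ (cyclePartition σ).part x,
            W * N ^ n * n.factorial * ((len x)⁻¹ + (len y)⁻¹) :=
          sum_congr rfl fun x _ ↦ sum_congr rfl (merge x)
      _ = W * N ^ n * n.factorial * (2 * (N * (n + 1))) := by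
          simp_rw [← mul_sum, len, sum_inv_card_part_add_inv_card_part, h]
          simp [N]
      _ = 2 * (W * N ^ (n + 1) * (n + 1).factorial) := by
          rw [Nat.factorial_succ]
          push_cast
          ring

theorem card_mul_fullCycleCompletions_one (h : Fintype.card α = n + 1) :
    (n + 1) * fullCycleCompletions n (1 : Perm α) = (n + 1) ^ n * n.factorial := by
  have hparts : #(cyclePartition (1 : Perm α)).parts = n + 1 := by
    rw [cyclePartition_one, Finpartition.card_bot, card_univ, h]
  simpa [h, cyclePartition_one, Finpartition.parts_bot] using card_mul_fullCycleCompletions hparts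

end FullCycle

theorem hurwitzCount_singleton {k : ℕ} (hk : k ≠ 0) (r : ℕ) :
    hurwitzCount k r {k} = fullCycleCompletions r (1 : Perm (Fin k)) := by
  have : NeZero k := ⟨hk⟩
  have parts_iff (τ : Perm (Fin k)) : τ.partition.parts = {k} ↔ τ.IsCycleOn Set.univ := by
    simpa using partition_parts_eq_singleton_card_iff (σ := τ)
  refine Nat.card_congr ⟨fun p ↦ ⟨p.1.1, p.2.1, ?_⟩,
    fun t ↦ ⟨(t.1, (List.ofFn t.1).prod⁻¹), t.2.1, ?_, mul_inv_cancel _, fun a b ↦ ?_⟩, ?_, ?_⟩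
  · rw [one_mul, eq_inv_of_mul_eq_one_left p.2.2.2.1, isCycleOn_inv]
    exact (parts_iff _).1 p.2.2.1
  · rw [parts_iff, isCycleOn_inv]
    simpa using t.2.2
  · obtain ⟨i, hi⟩ := (isCycleOn_inv.2 t.2.2).2 (Set.mem_univ a) (Set.mem_univ b)
    exact ⟨_, zpow_mem (Subgroup.subset_closure (.inr rfl)) i, by simpa using hi⟩
  · intro p
    ext1
    exact Prod.ext rfl (inv_eq_of_mul_eq_one_right p.2.2.2.1)
  · exact fun _ ↦ rfl

/-- `h_{0,(k)} = k^{k-3}` for every positive integer `k`. -/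
theorem hurwitz_genus_zero_one_part (k : ℕ) (hk : 1 ≤ k) :
    hurwitzNumber 0 {k} = (k : ℚ) ^ ((k : ℤ) - 3) := by
  obtain ⟨n, rfl⟩ : ∃ n, k = n + 1 := ⟨k - 1, by omega⟩
  have key : (n + 1 : ℚ) * hurwitzCount (n + 1) n {n + 1} = (n + 1) ^ n * n.factorial := by
    rw [hurwitzCount_singleton n.succ_ne_zero]
    exact_mod_cast card_mul_fullCycleCompletions_one (Fintype.card_fin (n + 1))
  have hn : (n + 1 : ℚ) ≠ 0 := by positivity
  have hr : 2 * 0 + 1 + (n + 1) - 2 = n := by omega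
  rw [hurwitzNumber, Multiset.sum_singleton, Multiset.card_singleton, hr, Nat.factorial_succ]
  push_cast
  rw [show (n + 1 - 3 : ℤ) = n - 2 by ring, zpow_sub₀ hn, zpow_natCast, zpow_ofNat]
  field_simp
  linear_combination key
end

section
/- For positive integers μ1, μ2 and complex x1, x2 with |x1|, |x2| < 1/e, the identity Σ_{μ1,μ2 ≥ 1} (1/(μ1+μ2)) (μ1^{μ1}/μ1!) (μ2^{μ2}/μ2!) x1^{μ1} x2^{μ2} = log( Σ_{k≥1} (k^{k-1}/k!) (x1^k - x2^k)/(x1 - x2) ) - Σ_{k≥1}(k^{k-1}/k!)x1^k - Σ_{k≥1}(k^{k-1}/k!)x2^k holds (where for x1 = x2 the difference quotient is interpreted as the derivative). -/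
open scoped Nat

/-!
Let `T x = ∑ k^(k-1)/k! x^k` be the tree function. Finite differences of powers give
`T (w * exp (-w)) = w` for small `w`, hence `T x * exp (-T x) = x` on the disc `‖x‖ < 1/e` by the
identity theorem. Consequently the pointed series `S = x T' = ∑ k^k/k! x^k` satisfies
`(1 - T) * (1 + S) = 1`.

Along the ray `z ↦ (z x, z y)` the Euler operator `z d/dz` cancels the factor `1/(μ₁ + μ₂)`, so it
maps the double series to `S(zx) S(zy)`. For the divided difference `q = (T x - T y) / (x - y)` the
relation between `S` and `T` makes the same operator send `log q` to `S(zx) + S(zy) + S(zx) S(zy)`.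
The difference is `S(zx) + S(zy)`, the image of `T(zx) + T(zy)`, and both sides vanish at `z = 0`.
The principal logarithm may be used because `T'`, and hence `q`, has positive real part:
`1 / T' = exp (-T) - x`, where `re (exp (-T)) > 1/e > re x`. The diagonal `x = y` is reached by
continuity.
-/

open Filter Finset Metric Set
open scoped Topology

section General

lemma norm_mul_lt_of_norm_le_one {A : Type*} [NonUnitalSeminormedRing A] {x z : A} {r : ℝ}
    (hz : ‖z‖ ≤ 1) (hx : ‖x‖ < r) : ‖z * x‖ < r :=
  ((norm_mul_le z x).trans (mul_le_of_le_one_left (norm_nonneg x) hz)).trans_lt hx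

lemma tsum_prod_eq_tsum_sum_antidiagonal {A α : Type*} [AddCommMonoid A] [HasAntidiagonal A]
    [AddCommMonoid α] [TopologicalSpace α] [ContinuousAdd α] [T3Space α] {f : A × A → α}
    (hf : Summable f) : ∑' p, f p = ∑' n, ∑ p ∈ antidiagonal n, f p := by
  rw [← HasAntidiagonal.sigmaAntidiagonalEquivProd.tsum_eq f]
  refine ((HasAntidiagonal.sigmaAntidiagonalEquivProd.summable_iff.mpr hf).tsum_sigma'
    fun n ↦ (hasSum_fintype _).summable).trans (tsum_congr fun n ↦ ?_)
  rw [tsum_fintype]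
  exact Finset.sum_coe_sort (antidiagonal n) f

lemma sum_range_neg_one_pow_mul_choose_mul_pow_eq_zero {R : Type*} [CommRing R] {m n : ℕ}
    (h : m < n) :
    ∑ k ∈ range (n + 1), (-1 : R) ^ (n - k) * n.choose k * (k : R) ^ m = 0 := by
  have key := congrFun (fwdDiff_iter_pow_eq_zero_of_lt (R := R) h) 0
  rw [fwdDiff_iter_eq_sum_shift] at key
  simpa using key

lemma continuousOn_ball_tsum {ι E F : Type*} [SeminormedAddCommGroup E] [NormedAddCommGroup F]
    [CompleteSpace F] {f : ι → E → F} {u : ι → ℝ → ℝ} {R : ℝ} (hf : ∀ i, Continuous (f i))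
    (hu : ∀ r, 0 ≤ r → r < R → Summable (u · r)) (hfu : ∀ i r p, ‖p‖ ≤ r → ‖f i p‖ ≤ u i r) :
    ContinuousOn (fun p ↦ ∑' i, f i p) (ball 0 R) := by
  intro p hp
  obtain ⟨r, hpr, hrR⟩ := exists_between (mem_ball_zero_iff.1 hp)
  have hr : 0 ≤ r := (norm_nonneg p).trans hpr.le
  have hball : ContinuousOn (fun p ↦ ∑' i, f i p) (ball 0 r) :=
    continuousOn_tsum (fun i ↦ (hf i).continuousOn) (hu r hr hrR)
      fun i q hq ↦ hfu i r q (mem_ball_zero_iff.1 hq).le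
  exact (hball.continuousAt (isOpen_ball.mem_nhds (mem_ball_zero_iff.2 hpr))).continuousWithinAt

lemma eq_of_hasDerivAt_zero_of_continuousOn_Icc {E : Type*} [NormedAddCommGroup E]
    [NormedSpace ℝ E] {f : ℝ → E} {a b : ℝ} (hab : a ≤ b) (hf : ContinuousOn f (Set.Icc a b))
    (hf' : ∀ t ∈ Set.Ioo a b, HasDerivAt f 0 t) : f a = f b := by
  obtain rfl | hab := hab.eq_or_lt
  · rfl
  obtain ⟨c, hc⟩ := isOpen_Ioo.exists_is_const_of_deriv_eq_zero isPreconnected_Ioo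
    (fun t ht ↦ (hf' t ht).differentiableAt.differentiableWithinAt) fun t ht ↦ (hf' t ht).deriv
  have hconst : EqOn f (fun _ ↦ c) (Set.Icc a b) :=
    EqOn.of_subset_closure hc hf continuousOn_const Ioo_subset_Icc_self (closure_Ioo hab.ne).ge
  rw [hconst (left_mem_Icc.2 hab.le), hconst (right_mem_Icc.2 hab.le)]

lemma re_slope_pos_of_convex {f : ℂ → ℂ} {s : Set ℂ} (hs : Convex ℝ s)
    (hf : ∀ z ∈ s, DifferentiableAt ℂ f z) (hf' : ∀ z ∈ s, 0 < (deriv f z).re) {x y : ℂ}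
    (hx : x ∈ s) (hy : y ∈ s) (hxy : x ≠ y) : 0 < (slope f x y).re := by
  let γ : ℝ → ℂ := AffineMap.lineMap x y
  have hmem : ∀ t ∈ Set.Icc (0 : ℝ) 1, γ t ∈ s := fun t ht ↦ hs.lineMap_mem hx hy ht
  have hderiv : ∀ t ∈ Set.Icc (0 : ℝ) 1,
      HasDerivAt (fun t ↦ (f (γ t) / (y - x)).re) (deriv f (γ t)).re t := by
    intro t ht
    have hcomp := ((hf _ (hmem t ht)).hasDerivAt.comp t AffineMap.hasDerivAt_lineMap).div_const
      (y - x)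
    rw [mul_div_cancel_right₀ _ (sub_ne_zero.2 hxy.symm)] at hcomp
    exact Complex.reCLM.hasFDerivAt.comp_hasDerivAt t hcomp
  obtain ⟨c, hc, hslope⟩ := exists_hasDerivAt_eq_slope _ _ zero_lt_one
    (fun t ht ↦ (hderiv t ht).continuousAt.continuousWithinAt)
    fun t ht ↦ hderiv t (Ioo_subset_Icc_self ht)
  have hpos := hf' _ (hmem c (Ioo_subset_Icc_self hc))
  rw [hslope] at hpos
  simpa [γ, slope_def_field, sub_div] using hpos

lemma re_dslope_pos_of_convex {f : ℂ → ℂ} {s : Set ℂ} (hs : Convex ℝ s)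
    (hf : ∀ z ∈ s, DifferentiableAt ℂ f z) (hf' : ∀ z ∈ s, 0 < (deriv f z).re) {x y : ℂ}
    (hx : x ∈ s) (hy : y ∈ s) : 0 < (dslope f x y).re := by
  obtain rfl | hxy := eq_or_ne x y
  · simpa only [dslope_same] using hf' x hx
  · simpa only [dslope_of_ne f hxy.symm] using re_slope_pos_of_convex hs hf hf' hx hy hxy

/- Writing `u = 1 - re t`, the hypotheses bound `(im t)^2` by `exp (-2 * u) - (1 - u)^2`, and
`cos b ≥ 1 - b^2 / 2` together with `exp (-u) ≤ 1 / (1 + u)` gives `cos (im t) > exp (-u)`. -/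
lemma exp_re_sub_one_lt_cos_im {t : ℂ} (ht : ‖t‖ < 1)
    (h : ‖t * Complex.exp (-t)‖ < (Real.exp 1)⁻¹) : Real.exp (t.re - 1) < Real.cos t.im := by
  set u := 1 - t.re with hu_def
  have hu : 0 < u := sub_pos.2 ((Complex.re_le_norm t).trans_lt ht)
  set q := Real.exp (t.re - 1) with hq_def
  have hq : 0 < q := Real.exp_pos _
  have hnorm : ‖t‖ < q := by
    rw [norm_mul, Complex.norm_exp, Complex.neg_re, Real.exp_neg, ← div_eq_mul_inv,
      div_lt_iff₀ (Real.exp_pos _), ← Real.exp_neg, ← Real.exp_add, neg_add_eq_sub] at h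
    exact h
  have him : t.im ^ 2 < q ^ 2 - (1 - u) ^ 2 := by
    have hsq : ‖t‖ ^ 2 < q ^ 2 := by gcongr
    rw [Complex.sq_norm, Complex.normSq_apply] at hsq
    linear_combination hsq
  have hqu : q * (1 + u) ≤ 1 := by
    have hexp : 1 + u ≤ q⁻¹ := by
      rw [hq_def, ← Real.exp_neg, neg_sub, add_comm]
      exact Real.add_one_le_exp u
    calc q * (1 + u) ≤ q * q⁻¹ := by gcongr
      _ = 1 := mul_inv_cancel₀ hq.ne'
  have hquad : q ^ 2 + 2 * q < 2 + (1 - u) ^ 2 := by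
    refine lt_of_mul_lt_mul_right (a := (1 + u) ^ 2) ?_ (by positivity)
    calc (q ^ 2 + 2 * q) * (1 + u) ^ 2
        = (q * (1 + u)) ^ 2 + 2 * (q * (1 + u)) * (1 + u) := by ring
      _ ≤ 1 ^ 2 + 2 * 1 * (1 + u) := by gcongr
      _ < (2 + (1 - u) ^ 2) * (1 + u) ^ 2 := by nlinarith [pow_pos hu 4]
  linarith [Real.one_sub_sq_div_two_le_cos (x := t.im)]

lemma inv_exp_one_lt_re_exp_neg {t : ℂ} (ht : ‖t‖ < 1)
    (h : ‖t * Complex.exp (-t)‖ < (Real.exp 1)⁻¹) :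
    (Real.exp 1)⁻¹ < (Complex.exp (-t)).re := by
  rw [Complex.exp_re, Complex.neg_re, Complex.neg_im, Real.cos_neg]
  calc (Real.exp 1)⁻¹ = Real.exp (-t.re) * Real.exp (t.re - 1) := by
        rw [← Real.exp_neg, ← Real.exp_add]; ring_nf
    _ < Real.exp (-t.re) * Real.cos t.im := by
        gcongr
        exact exp_re_sub_one_lt_cos_im ht h

end General

/-- The coefficient of `x ^ (k + 1)` in the tree function, that is `n ^ (n - 1) / n!` for
`n = k + 1`. -/
noncomputable def treeCoeff (k : ℕ) : ℂ := (k + 1 : ℂ) ^ k / ((k + 1)! : ℂ)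

/-- The tree function `∑ n ^ (n - 1) / n! * x ^ n`, summed over `n = k + 1`: the exponential
generating function of rooted labelled trees. -/
noncomputable def treeFun (x : ℂ) : ℂ := ∑' k : ℕ, treeCoeff k * x ^ (k + 1)

/-- The factor `n ^ n / n!` of the Hurwitz numbers, for `n = k + 1`. -/
noncomputable def pointedCoeff (k : ℕ) : ℂ := (k + 1 : ℂ) ^ (k + 1) / ((k + 1)! : ℂ)

/-- The series `∑ n ^ n / n! * x ^ n` over `n ≥ 1`, the image of the tree function under the Euler
operator `x d/dx`. -/
noncomputable def pointedTreeFun (x : ℂ) : ℂ := ∑' k : ℕ, pointedCoeff k * x ^ (k + 1)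

/-- The divided difference of the tree function as a series, so that it also makes sense on the
diagonal. -/
noncomputable def treeDivDiff (x y : ℂ) : ℂ :=
  ∑' k : ℕ, treeCoeff k * ∑ i ∈ range (k + 1), x ^ i * y ^ (k - i)

/-- The Laplace transform of the `(0,2)` Hurwitz numbers, indexed by `p = (μ₁ - 1, μ₂ - 1)`. -/
noncomputable def hurwitzLaplace (x y : ℂ) : ℂ :=
  ∑' p : ℕ × ℕ, ((p.1 + 1 : ℂ) + (p.2 + 1 : ℂ))⁻¹ * pointedCoeff p.1 * pointedCoeff p.2 *
    x ^ (p.1 + 1) * y ^ (p.2 + 1)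

section Coefficients

lemma norm_natCast_add_one (k : ℕ) : ‖(k + 1 : ℂ)‖ = k + 1 := by
  exact_mod_cast Complex.norm_natCast (k + 1)

lemma add_one_mul_treeCoeff (k : ℕ) : (k + 1 : ℂ) * treeCoeff k = pointedCoeff k := by
  rw [treeCoeff, pointedCoeff]
  ring

lemma norm_pointedCoeff (k : ℕ) : ‖pointedCoeff k‖ = (k + 1) * ‖treeCoeff k‖ := by
  rw [← add_one_mul_treeCoeff, norm_mul, norm_natCast_add_one]

lemma norm_treeCoeff_le (k : ℕ) : ‖treeCoeff k‖ ≤ ‖pointedCoeff k‖ := by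
  rw [norm_pointedCoeff]
  exact le_mul_of_one_le_left (norm_nonneg _) (le_add_of_nonneg_left k.cast_nonneg)

lemma norm_pointedCoeff_le (k : ℕ) : ‖pointedCoeff k‖ ≤ Real.exp 1 ^ (k + 1) := by
  have hexp := Real.pow_div_factorial_le_exp (x := (k + 1 : ℝ)) (by positivity) (k + 1)
  rw [pointedCoeff, norm_div, norm_pow, norm_natCast_add_one, Complex.norm_natCast,
    ← Real.exp_nat_mul]
  simpa only [Nat.cast_add, Nat.cast_one, mul_one] using hexp

lemma summable_norm_pointedCoeff_mul_pow {r : ℝ} (h0 : 0 ≤ r) (h : r < (Real.exp 1)⁻¹) :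
    Summable fun k : ℕ ↦ ‖pointedCoeff k‖ * r ^ k := by
  have hratio : Real.exp 1 * r < 1 := by
    rwa [← lt_inv_mul_iff₀ (Real.exp_pos 1), mul_one]
  refine .of_nonneg_of_le (fun k ↦ by positivity) (fun k ↦ ?_)
    ((summable_geometric_of_lt_one (by positivity) hratio).mul_left (Real.exp 1))
  calc ‖pointedCoeff k‖ * r ^ k ≤ Real.exp 1 ^ (k + 1) * r ^ k := by
        gcongr
        exact norm_pointedCoeff_le k
    _ = Real.exp 1 * (Real.exp 1 * r) ^ k := by ring

lemma summable_norm_pointedCoeff_mul_pow_succ {r : ℝ} (h0 : 0 ≤ r) (h : r < (Real.exp 1)⁻¹) :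
    Summable fun k : ℕ ↦ ‖pointedCoeff k‖ * r ^ (k + 1) :=
  ((summable_norm_pointedCoeff_mul_pow h0 h).mul_left r).congr fun k ↦ by ring

lemma summable_norm_treeCoeff_mul_pow_succ {r : ℝ} (h0 : 0 ≤ r) (h : r < (Real.exp 1)⁻¹) :
    Summable fun k : ℕ ↦ ‖treeCoeff k‖ * r ^ (k + 1) := by
  refine .of_nonneg_of_le (fun k ↦ by positivity) (fun k ↦ ?_)
    (summable_norm_pointedCoeff_mul_pow_succ h0 h)
  gcongr
  exact norm_treeCoeff_le k

end Coefficients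

section Derivative

variable {x : ℂ}

lemma summable_treeFun (hx : ‖x‖ < (Real.exp 1)⁻¹) :
    Summable fun k : ℕ ↦ treeCoeff k * x ^ (k + 1) := by
  refine .of_norm ?_
  simpa only [norm_mul, norm_pow] using summable_norm_treeCoeff_mul_pow_succ (norm_nonneg x) hx

@[simp]
lemma treeFun_zero : treeFun 0 = 0 := by simp [treeFun]

lemma hasDerivAt_treeFun_tsum (hx : ‖x‖ < (Real.exp 1)⁻¹) :
    HasDerivAt treeFun (∑' k : ℕ, pointedCoeff k * x ^ k) x := by
  obtain ⟨r, hxr, hr⟩ := exists_between hx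
  have hr0 : 0 < r := (norm_nonneg x).trans_lt hxr
  refine hasDerivAt_tsum_of_isPreconnected (t := ball 0 r) (y₀ := 0)
    (g := fun k x ↦ treeCoeff k * x ^ (k + 1)) (g' := fun k x ↦ pointedCoeff k * x ^ k)
    (summable_norm_pointedCoeff_mul_pow hr0.le hr) isOpen_ball (convex_ball _ _).isPreconnected
    (fun k y _ ↦ ?_) (fun k y hy ↦ ?_) (mem_ball_self hr0) (by simp) (mem_ball_zero_iff.2 hxr)
  · convert! (hasDerivAt_pow (k + 1) y).const_mul (treeCoeff k) using 1
    rw [← add_one_mul_treeCoeff]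
    push_cast
    ring
  · have hyr : ‖y‖ ≤ r := (mem_ball_zero_iff.1 hy).le
    rw [norm_mul, norm_pow]
    gcongr

lemma differentiableAt_treeFun (hx : ‖x‖ < (Real.exp 1)⁻¹) : DifferentiableAt ℂ treeFun x :=
  (hasDerivAt_treeFun_tsum hx).differentiableAt

lemma deriv_treeFun (hx : ‖x‖ < (Real.exp 1)⁻¹) :
    deriv treeFun x = ∑' k : ℕ, pointedCoeff k * x ^ k :=
  (hasDerivAt_treeFun_tsum hx).deriv

lemma pointedTreeFun_eq (hx : ‖x‖ < (Real.exp 1)⁻¹) :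
    pointedTreeFun x = x * deriv treeFun x := by
  rw [deriv_treeFun hx, ← tsum_mul_left, pointedTreeFun]
  exact tsum_congr fun k ↦ by ring

end Derivative

section FunctionalEquation

lemma sum_antidiagonal_treeCoeff_mul_neg_pow_eq_zero {n : ℕ} (hn : n ≠ 0) :
    ∑ p ∈ antidiagonal n, treeCoeff p.1 * ((-(p.1 + 1 : ℂ)) ^ p.2 / (p.2 ! : ℂ)) = 0 := by
  have key := sum_range_neg_one_pow_mul_choose_mul_pow_eq_zero (R := ℂ) n.lt_succ_self
  rw [sum_range_succ', Nat.cast_zero, zero_pow hn, mul_zero, add_zero] at key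
  have hfact : ((n + 1)! : ℂ) ≠ 0 := Nat.cast_ne_zero.2 (Nat.factorial_ne_zero _)
  refine mul_left_cancel₀ hfact ?_
  rw [mul_zero, ← key, Finset.Nat.sum_antidiagonal_eq_sum_range_succ_mk, mul_sum]
  refine Finset.sum_congr rfl fun k hk ↦ ?_
  obtain ⟨j, rfl⟩ := Nat.exists_eq_add_of_le (mem_range_succ_iff.1 hk)
  have hchoose : (((k + j).succ.choose (k + 1) : ℕ) : ℂ) = (k + j + 1)! / ((k + 1)! * j !) := by
    rw [Nat.cast_choose ℂ (by lia), show (k + j).succ - (k + 1) = j by lia]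
  rw [hchoose, show (k + j).succ - (k + 1) = j by lia, Nat.add_sub_cancel_left, neg_pow, treeCoeff]
  push_cast
  ring

lemma sum_antidiagonal_treeCoeff_mul_pow (n : ℕ) (w : ℂ) :
    ∑ p ∈ antidiagonal n,
      treeCoeff p.1 * w ^ (p.1 + 1) * ((-((p.1 + 1 : ℂ) * w)) ^ p.2 / (p.2 ! : ℂ)) =
        if n = 0 then w else 0 := by
  split_ifs with hn
  · simp [hn, treeCoeff]
  · rw [← mul_zero (w ^ (n + 1)), ← sum_antidiagonal_treeCoeff_mul_neg_pow_eq_zero hn, mul_sum]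
    refine Finset.sum_congr rfl fun p hp ↦ ?_
    rw [← mem_antidiagonal.1 hp, ← neg_mul, mul_pow]
    ring

lemma hasSum_treeCoeff_mul_exp (k : ℕ) (w : ℂ) :
    HasSum (fun j : ℕ ↦ treeCoeff k * w ^ (k + 1) * ((-((k + 1 : ℂ) * w)) ^ j / (j ! : ℂ)))
      (treeCoeff k * (w * Complex.exp (-w)) ^ (k + 1)) := by
  convert! (NormedSpace.expSeries_div_hasSum_exp (𝔸 := ℂ) (-((k + 1 : ℂ) * w))).mul_left
    (treeCoeff k * w ^ (k + 1)) using 1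
  rw [← Complex.exp_eq_exp_ℂ, mul_pow, ← Complex.exp_nat_mul]
  push_cast
  ring_nf

lemma hasSum_norm_treeCoeff_mul_exp (k : ℕ) (w : ℂ) :
    HasSum (fun j : ℕ ↦ ‖treeCoeff k * w ^ (k + 1) * ((-((k + 1 : ℂ) * w)) ^ j / (j ! : ℂ))‖)
      (‖treeCoeff k‖ * (‖w‖ * Real.exp ‖w‖) ^ (k + 1)) := by
  convert! (NormedSpace.expSeries_div_hasSum_exp (𝔸 := ℝ) ((k + 1 : ℝ) * ‖w‖)).mul_left
    (‖treeCoeff k‖ * ‖w‖ ^ (k + 1)) using 1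
  · ext j
    simp only [norm_mul, norm_div, norm_pow, norm_neg, norm_natCast_add_one, Complex.norm_natCast]
  · rw [← Real.exp_eq_exp_ℝ, mul_pow, ← Real.exp_nat_mul]
    push_cast
    ring_nf

lemma treeFun_mul_exp_neg {w : ℂ} (hw : ‖w‖ * Real.exp ‖w‖ < (Real.exp 1)⁻¹) :
    treeFun (w * Complex.exp (-w)) = w := by
  let f : ℕ × ℕ → ℂ := fun p ↦
    treeCoeff p.1 * w ^ (p.1 + 1) * ((-((p.1 + 1 : ℂ) * w)) ^ p.2 / (p.2 ! : ℂ))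
  have hf : Summable f := by
    refine .of_norm ((summable_prod_of_nonneg fun _ ↦ norm_nonneg _).2
      ⟨fun k ↦ (hasSum_norm_treeCoeff_mul_exp k w).summable, ?_⟩)
    simp_rw [f, fun k ↦ (hasSum_norm_treeCoeff_mul_exp k w).tsum_eq]
    exact summable_norm_treeCoeff_mul_pow_succ (by positivity) hw
  calc treeFun (w * Complex.exp (-w)) = ∑' k, ∑' j, f (k, j) :=
        tsum_congr fun k ↦ (hasSum_treeCoeff_mul_exp k w).tsum_eq.symm
    _ = ∑' n, ∑ p ∈ antidiagonal n, f p := by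
        rw [← hf.tsum_prod' fun k ↦ (hasSum_treeCoeff_mul_exp k w).summable,
          tsum_prod_eq_tsum_sum_antidiagonal hf]
    _ = w := by
        simp_rw [f, sum_antidiagonal_treeCoeff_mul_pow, tsum_ite_eq]

lemma map_mul_exp_neg_nhds_zero : map (fun w : ℂ ↦ w * Complex.exp (-w)) (𝓝 0) = 𝓝 0 := by
  have hderiv : HasStrictDerivAt (fun w : ℂ ↦ w * Complex.exp (-w)) 1 0 := by
    simpa using! (hasStrictDerivAt_id (0 : ℂ)).mul (hasStrictDerivAt_id (0 : ℂ)).neg.cexp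
  simpa using hderiv.map_nhds_eq one_ne_zero

lemma eventually_treeFun_mul_exp_neg_treeFun :
    ∀ᶠ x in 𝓝 (0 : ℂ), treeFun x * Complex.exp (-treeFun x) = x := by
  have hcont : ContinuousAt (fun w : ℂ ↦ ‖w‖ * Real.exp ‖w‖) 0 := by fun_prop
  have hsmall : ∀ᶠ w : ℂ in 𝓝 0, ‖w‖ * Real.exp ‖w‖ < (Real.exp 1)⁻¹ :=
    hcont.eventually_lt_const (by simpa using Real.exp_pos 1)
  rw [← map_mul_exp_neg_nhds_zero, eventually_map]
  filter_upwards [hsmall] with w hw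
  rw [treeFun_mul_exp_neg hw]

theorem treeFun_mul_exp_neg_treeFun {x : ℂ} (hx : ‖x‖ < (Real.exp 1)⁻¹) :
    treeFun x * Complex.exp (-treeFun x) = x := by
  have hT : DifferentiableOn ℂ treeFun (ball 0 (Real.exp 1)⁻¹) := fun y hy ↦
    (differentiableAt_treeFun (mem_ball_zero_iff.1 hy)).differentiableWithinAt
  exact ((hT.mul hT.neg.cexp).analyticOnNhd isOpen_ball).eqOn_of_preconnected_of_eventuallyEq
    (differentiableOn_id.analyticOnNhd isOpen_ball) (convex_ball _ _).isPreconnected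
    (mem_ball_self (by positivity)) eventually_treeFun_mul_exp_neg_treeFun
    (mem_ball_zero_iff.2 hx)

end FunctionalEquation

section UnitDisc

variable {x : ℂ}

lemma norm_treeFun_ne_one (hx : ‖x‖ < (Real.exp 1)⁻¹) : ‖treeFun x‖ ≠ 1 := by
  intro h
  refine hx.not_ge ?_
  calc (Real.exp 1)⁻¹ = Real.exp (-1) := (Real.exp_neg 1).symm
    _ ≤ Real.exp (-(treeFun x).re) := by
        gcongr
        exact (Complex.re_le_norm _).trans_eq h
    _ = ‖treeFun x * Complex.exp (-treeFun x)‖ := by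
        rw [norm_mul, h, one_mul, Complex.norm_exp, Complex.neg_re]
    _ = ‖x‖ := by rw [treeFun_mul_exp_neg_treeFun hx]

lemma norm_treeFun_lt_one (hx : ‖x‖ < (Real.exp 1)⁻¹) : ‖treeFun x‖ < 1 := by
  by_contra! h
  have hcont : ContinuousOn (fun y ↦ ‖treeFun y‖) (ball 0 (Real.exp 1)⁻¹) := fun y hy ↦
    (differentiableAt_treeFun (mem_ball_zero_iff.1 hy)).continuousAt.norm.continuousWithinAt
  obtain ⟨y, hy, hy1⟩ := (convex_ball (0 : ℂ) _).isPreconnected.intermediate_value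
    (mem_ball_self (by positivity)) (mem_ball_zero_iff.2 hx) hcont
    (show (1 : ℝ) ∈ Set.Icc _ _ from ⟨by simp, h⟩)
  exact norm_treeFun_ne_one (mem_ball_zero_iff.1 hy) hy1

lemma deriv_treeFun_mul_exp_neg_sub (hx : ‖x‖ < (Real.exp 1)⁻¹) :
    deriv treeFun x * (Complex.exp (-treeFun x) - x) = 1 := by
  have hT := (differentiableAt_treeFun hx).hasDerivAt
  have hid : (fun y ↦ treeFun y * Complex.exp (-treeFun y)) =ᶠ[𝓝 x] id := by
    filter_upwards [continuous_norm.continuousAt.eventually_lt_const hx] with y hy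
    exact treeFun_mul_exp_neg_treeFun hy
  have huniq := (hT.mul hT.neg.cexp).unique ((hasDerivAt_id x).congr_of_eventuallyEq hid)
  simp only [Pi.neg_apply] at huniq
  linear_combination huniq + deriv treeFun x * treeFun_mul_exp_neg_treeFun hx

theorem re_deriv_treeFun_pos (hx : ‖x‖ < (Real.exp 1)⁻¹) : 0 < (deriv treeFun x).re := by
  have hre : 0 < (Complex.exp (-treeFun x) - x).re := by
    have hexp := inv_exp_one_lt_re_exp_neg (norm_treeFun_lt_one hx)
      (by rwa [treeFun_mul_exp_neg_treeFun hx])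
    rw [Complex.sub_re, sub_pos]
    exact (Complex.re_le_norm x).trans_lt (hx.trans hexp)
  have hne : Complex.exp (-treeFun x) - x ≠ 0 := by
    rintro h
    simp [h] at hre
  rw [eq_inv_of_mul_eq_one_left (deriv_treeFun_mul_exp_neg_sub hx), Complex.inv_re]
  exact div_pos hre (Complex.normSq_pos.2 hne)

lemma one_sub_treeFun_mul_one_add_pointedTreeFun (hx : ‖x‖ < (Real.exp 1)⁻¹) :
    (1 - treeFun x) * (1 + pointedTreeFun x) = 1 := by
  have hexp : Complex.exp (-treeFun x) ≠ 0 := Complex.exp_ne_zero _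
  refine mul_left_cancel₀ hexp ?_
  rw [pointedTreeFun_eq hx]
  linear_combination x * deriv_treeFun_mul_exp_neg_sub hx -
    (1 + x * deriv treeFun x) * treeFun_mul_exp_neg_treeFun hx

end UnitDisc

section DividedDifference

variable {x y : ℂ}

lemma treeDivDiff_mul_sub (hx : ‖x‖ < (Real.exp 1)⁻¹) (hy : ‖y‖ < (Real.exp 1)⁻¹) :
    treeDivDiff x y * (x - y) = treeFun x - treeFun y := by
  rw [treeDivDiff, ← tsum_mul_right, treeFun, treeFun,
    ← (summable_treeFun hx).tsum_sub (summable_treeFun hy)]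
  refine tsum_congr fun k ↦ ?_
  have hgeom := geom_sum₂_mul x y (k + 1)
  rw [Nat.add_sub_cancel] at hgeom
  rw [mul_assoc, hgeom, mul_sub]

lemma treeDivDiff_self (hx : ‖x‖ < (Real.exp 1)⁻¹) : treeDivDiff x x = deriv treeFun x := by
  rw [deriv_treeFun hx, treeDivDiff]
  refine tsum_congr fun k ↦ ?_
  have hpow : ∀ i ∈ range (k + 1), x ^ i * x ^ (k - i) = x ^ k := fun i hi ↦
    pow_mul_pow_sub x (mem_range_succ_iff.1 hi)
  rw [sum_congr rfl hpow, sum_const, card_range, nsmul_eq_mul, ← add_one_mul_treeCoeff]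
  push_cast
  ring

lemma treeDivDiff_eq_dslope (hx : ‖x‖ < (Real.exp 1)⁻¹) (hy : ‖y‖ < (Real.exp 1)⁻¹) :
    treeDivDiff x y = dslope treeFun x y := by
  obtain rfl | hxy := eq_or_ne x y
  · rw [treeDivDiff_self hx, dslope_same]
  · rw [dslope_of_ne _ hxy.symm, slope_comm, slope_def_field,
      eq_div_iff (sub_ne_zero.2 hxy), treeDivDiff_mul_sub hx hy]

lemma re_treeDivDiff_pos (hx : ‖x‖ < (Real.exp 1)⁻¹) (hy : ‖y‖ < (Real.exp 1)⁻¹) :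
    0 < (treeDivDiff x y).re := by
  rw [treeDivDiff_eq_dslope hx hy]
  exact re_dslope_pos_of_convex (convex_ball 0 (Real.exp 1)⁻¹)
    (fun z hz ↦ differentiableAt_treeFun (mem_ball_zero_iff.1 hz))
    (fun z hz ↦ re_deriv_treeFun_pos (mem_ball_zero_iff.1 hz))
    (mem_ball_zero_iff.2 hx) (mem_ball_zero_iff.2 hy)

lemma treeDivDiff_ne_zero (hx : ‖x‖ < (Real.exp 1)⁻¹) (hy : ‖y‖ < (Real.exp 1)⁻¹) :
    treeDivDiff x y ≠ 0 :=
  Complex.slitPlane_ne_zero (Or.inl (re_treeDivDiff_pos hx hy))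

@[simp]
lemma treeDivDiff_zero_zero : treeDivDiff 0 0 = 1 := by
  have h0 : ‖(0 : ℂ)‖ < (Real.exp 1)⁻¹ := by simpa using Real.exp_pos 1
  simpa [treeDivDiff_self h0] using deriv_treeFun_mul_exp_neg_sub h0

lemma continuousOn_treeDivDiff :
    ContinuousOn (fun p : ℂ × ℂ ↦ treeDivDiff p.1 p.2) (ball 0 (Real.exp 1)⁻¹) := by
  refine continuousOn_ball_tsum (u := fun k r ↦ ‖pointedCoeff k‖ * r ^ k) (fun k ↦ by fun_prop)
    (fun r ↦ summable_norm_pointedCoeff_mul_pow) fun k r p hp ↦ ?_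
  obtain ⟨h1, h2⟩ := norm_prod_le_iff.1 hp
  have hr : 0 ≤ r := (norm_nonneg p).trans hp
  have hsum : ‖∑ i ∈ range (k + 1), p.1 ^ i * p.2 ^ (k - i)‖ ≤ (k + 1) * r ^ k := by
    calc ‖∑ i ∈ range (k + 1), p.1 ^ i * p.2 ^ (k - i)‖ ≤ ∑ _i ∈ range (k + 1), r ^ k := by
          refine norm_sum_le_of_le _ fun i hi ↦ ?_
          rw [norm_mul, norm_pow, norm_pow, ← pow_mul_pow_sub r (mem_range_succ_iff.1 hi)]
          gcongr
      _ = (k + 1) * r ^ k := by simp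
  calc ‖treeCoeff k * ∑ i ∈ range (k + 1), p.1 ^ i * p.2 ^ (k - i)‖
      ≤ ‖treeCoeff k‖ * ((k + 1) * r ^ k) := by
        rw [norm_mul]
        gcongr
    _ = ‖pointedCoeff k‖ * r ^ k := by
        rw [norm_pointedCoeff]
        ring

end DividedDifference

section HurwitzLaplace

@[simp]
lemma hurwitzLaplace_zero_zero : hurwitzLaplace 0 0 = 0 := by simp [hurwitzLaplace]

lemma norm_inv_add_le_one (p : ℕ × ℕ) : ‖((p.1 + 1 : ℂ) + (p.2 + 1 : ℂ))⁻¹‖ ≤ 1 := by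
  rw [norm_inv, show (p.1 + 1 : ℂ) + (p.2 + 1) = (p.1 + 1 + p.2 : ℕ) + 1 by push_cast; ring,
    norm_natCast_add_one]
  exact inv_le_one_of_one_le₀ (le_add_of_nonneg_left (Nat.cast_nonneg _))

lemma continuousOn_hurwitzLaplace :
    ContinuousOn (fun p : ℂ × ℂ ↦ hurwitzLaplace p.1 p.2) (ball 0 (Real.exp 1)⁻¹) := by
  refine continuousOn_ball_tsum
    (u := fun i r ↦ (‖pointedCoeff i.1‖ * r ^ (i.1 + 1)) * (‖pointedCoeff i.2‖ * r ^ (i.2 + 1)))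
    (fun i ↦ by fun_prop) (fun r h0 hr ↦ ?_) fun i r p hp ↦ ?_
  · have hs := summable_norm_pointedCoeff_mul_pow_succ h0 hr
    exact hs.mul_of_nonneg hs (fun k ↦ by positivity) fun k ↦ by positivity
  · obtain ⟨h1, h2⟩ := norm_prod_le_iff.1 hp
    have hr : 0 ≤ r := (norm_nonneg p).trans hp
    simp only [norm_mul, norm_pow]
    calc _ ≤ 1 * ‖pointedCoeff i.1‖ * ‖pointedCoeff i.2‖ * r ^ (i.1 + 1) * r ^ (i.2 + 1) := by
          gcongr
          exact norm_inv_add_le_one i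
      _ = _ := by ring

end HurwitzLaplace

section Ray

variable {x y z : ℂ}

lemma hasDerivAt_treeFun_ray (hz : z ≠ 0) (hx : ‖z * x‖ < (Real.exp 1)⁻¹) :
    HasDerivAt (fun z ↦ treeFun (z * x)) (pointedTreeFun (z * x) / z) z := by
  convert! (differentiableAt_treeFun hx).hasDerivAt.comp z (hasDerivAt_mul_const x) using 1
  rw [pointedTreeFun_eq hx]
  field_simp

lemma hasDerivAt_treeDivDiff_ray (hz : z ≠ 0) (hxy : x ≠ y) (hx : ‖z * x‖ < (Real.exp 1)⁻¹)
    (hy : ‖z * y‖ < (Real.exp 1)⁻¹) :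
    HasDerivAt (fun z ↦ treeDivDiff (z * x) (z * y))
      (treeDivDiff (z * x) (z * y) * (pointedTreeFun (z * x) + pointedTreeFun (z * y) +
        pointedTreeFun (z * x) * pointedTreeFun (z * y)) / z) z := by
  have hd : x - y ≠ 0 := sub_ne_zero.2 hxy
  have hdiff {w : ℂ} (hwx : ‖w * x‖ < (Real.exp 1)⁻¹) (hwy : ‖w * y‖ < (Real.exp 1)⁻¹) :
      treeDivDiff (w * x) (w * y) * (w * (x - y)) = treeFun (w * x) - treeFun (w * y) := by
    rw [mul_sub, treeDivDiff_mul_sub hwx hwy]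
  have heq : (fun w ↦ treeDivDiff (w * x) (w * y)) =ᶠ[𝓝 z]
      fun w ↦ (treeFun (w * x) - treeFun (w * y)) / (w * (x - y)) := by
    have hcont (v : ℂ) : ContinuousAt (fun w ↦ ‖w * v‖) z := by fun_prop
    filter_upwards [(hcont x).eventually_lt_const hx, (hcont y).eventually_lt_const hy,
      eventually_ne_nhds hz] with w hwx hwy hw
    rw [eq_div_iff (mul_ne_zero hw hd), hdiff hwx hwy]
  refine HasDerivAt.congr_of_eventuallyEq ?_ heq
  convert! ((hasDerivAt_treeFun_ray hz hx).sub (hasDerivAt_treeFun_ray hz hy)).div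
    (hasDerivAt_mul_const (x - y)) (mul_ne_zero hz hd) using 1
  have hS : pointedTreeFun (z * x) - pointedTreeFun (z * y) =
      (treeFun (z * x) - treeFun (z * y)) *
        ((1 + pointedTreeFun (z * x)) * (1 + pointedTreeFun (z * y))) := by
    linear_combination (1 + pointedTreeFun (z * y)) *
      one_sub_treeFun_mul_one_add_pointedTreeFun hx -
        (1 + pointedTreeFun (z * x)) * one_sub_treeFun_mul_one_add_pointedTreeFun hy
  simp only [Pi.sub_apply]
  rw [← sub_div, hS, ← hdiff hx hy]
  field_simp
  ring

lemma hasDerivAt_log_treeDivDiff_ray (hz : z ≠ 0) (hxy : x ≠ y)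
    (hx : ‖z * x‖ < (Real.exp 1)⁻¹) (hy : ‖z * y‖ < (Real.exp 1)⁻¹) :
    HasDerivAt (fun z ↦ Complex.log (treeDivDiff (z * x) (z * y)))
      ((pointedTreeFun (z * x) + pointedTreeFun (z * y) +
        pointedTreeFun (z * x) * pointedTreeFun (z * y)) / z) z := by
  convert! (hasDerivAt_treeDivDiff_ray hz hxy hx hy).clog (Or.inl (re_treeDivDiff_pos hx hy))
    using 1
  rw [mul_div_assoc, mul_div_cancel_left₀ _ (treeDivDiff_ne_zero hx hy)]

lemma summable_norm_pointedTreeFun (hx : ‖x‖ < (Real.exp 1)⁻¹) :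
    Summable fun k : ℕ ↦ ‖pointedCoeff k * x ^ (k + 1)‖ := by
  simpa only [norm_mul, norm_pow] using
    summable_norm_pointedCoeff_mul_pow_succ (norm_nonneg x) hx

lemma tsum_pointedCoeff_mul_pointedCoeff_ray (hz : z ≠ 0) (hx : ‖z * x‖ < (Real.exp 1)⁻¹)
    (hy : ‖z * y‖ < (Real.exp 1)⁻¹) :
    ∑' p : ℕ × ℕ, (pointedCoeff p.1 * x ^ (p.1 + 1)) * (pointedCoeff p.2 * y ^ (p.2 + 1)) *
      z ^ (p.1 + p.2 + 1) = pointedTreeFun (z * x) * pointedTreeFun (z * y) / z := by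
  rw [pointedTreeFun, pointedTreeFun, tsum_mul_tsum_of_summable_norm
    (summable_norm_pointedTreeFun hx) (summable_norm_pointedTreeFun hy), ← tsum_div_const]
  refine tsum_congr fun p ↦ ?_
  rw [eq_div_iff hz]
  ring

lemma hasDerivAt_hurwitzLaplace_term_ray (p : ℕ × ℕ) :
    HasDerivAt (fun z ↦ ((p.1 + 1 : ℂ) + (p.2 + 1 : ℂ))⁻¹ * pointedCoeff p.1 * pointedCoeff p.2 *
        (z * x) ^ (p.1 + 1) * (z * y) ^ (p.2 + 1))
      ((pointedCoeff p.1 * x ^ (p.1 + 1)) * (pointedCoeff p.2 * y ^ (p.2 + 1)) *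
        z ^ (p.1 + p.2 + 1)) z := by
  have hne : (p.1 + 1 : ℂ) + (p.2 + 1) ≠ 0 := by
    exact_mod_cast (by lia : p.1 + 1 + (p.2 + 1) ≠ 0)
  convert! (hasDerivAt_pow (p.1 + p.2 + 2) z).const_mul (((p.1 + 1 : ℂ) + (p.2 + 1 : ℂ))⁻¹ *
    (pointedCoeff p.1 * x ^ (p.1 + 1)) * (pointedCoeff p.2 * y ^ (p.2 + 1))) using 1
  · ext w
    ring
  · rw [show p.1 + p.2 + 2 - 1 = p.1 + p.2 + 1 by lia]
    push_cast
    field_simp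
    ring

lemma hasDerivAt_hurwitzLaplace_ray (hx : ‖x‖ < (Real.exp 1)⁻¹) (hy : ‖y‖ < (Real.exp 1)⁻¹)
    (hz : z ≠ 0) (hz1 : ‖z‖ < 1) :
    HasDerivAt (fun z ↦ hurwitzLaplace (z * x) (z * y))
      (pointedTreeFun (z * x) * pointedTreeFun (z * y) / z) z := by
  rw [← tsum_pointedCoeff_mul_pointedCoeff_ray hz (norm_mul_lt_of_norm_le_one hz1.le hx)
    (norm_mul_lt_of_norm_le_one hz1.le hy)]
  refine hasDerivAt_tsum_of_isPreconnected (t := ball 0 1) (y₀ := 0)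
    ((summable_norm_pointedTreeFun hx).mul_norm (summable_norm_pointedTreeFun hy)) isOpen_ball
    (convex_ball _ _).isPreconnected (fun p w _ ↦ hasDerivAt_hurwitzLaplace_term_ray p)
    (fun p w hw ↦ ?_) (mem_ball_self one_pos) (by simp) (mem_ball_zero_iff.2 hz1)
  rw [norm_mul _ (w ^ _), norm_pow]
  exact mul_le_of_le_one_right (norm_nonneg _)
    (pow_le_one₀ (norm_nonneg w) (mem_ball_zero_iff.1 hw).le)

end Ray

section Defect

/-- The difference of the two sides of the Laplace transform formula, shown to vanish on the
bidisc of radius `1/e`. -/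
noncomputable def laplaceDefect (x y : ℂ) : ℂ :=
  Complex.log (treeDivDiff x y) - treeFun x - treeFun y - hurwitzLaplace x y

variable {x y : ℂ}

lemma continuousOn_laplaceDefect :
    ContinuousOn (fun p : ℂ × ℂ ↦ laplaceDefect p.1 p.2) (ball 0 (Real.exp 1)⁻¹) := by
  have hmem {p : ℂ × ℂ} (hp : p ∈ ball 0 (Real.exp 1)⁻¹) :
      ‖p.1‖ < (Real.exp 1)⁻¹ ∧ ‖p.2‖ < (Real.exp 1)⁻¹ :=
    max_lt_iff.1 (mem_ball_zero_iff.1 hp)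
  have hlog := continuousOn_treeDivDiff.clog fun p hp ↦
    Or.inl (re_treeDivDiff_pos (hmem hp).1 (hmem hp).2)
  have hfst : ContinuousOn (fun p : ℂ × ℂ ↦ treeFun p.1) (ball 0 (Real.exp 1)⁻¹) := fun p hp ↦
    ((differentiableAt_treeFun (hmem hp).1).continuousAt.comp
      continuousAt_fst).continuousWithinAt
  have hsnd : ContinuousOn (fun p : ℂ × ℂ ↦ treeFun p.2) (ball 0 (Real.exp 1)⁻¹) := fun p hp ↦
    ((differentiableAt_treeFun (hmem hp).2).continuousAt.comp
      continuousAt_snd).continuousWithinAt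
  exact ((hlog.sub hfst).sub hsnd).sub continuousOn_hurwitzLaplace

lemma continuousAt_laplaceDefect (hx : ‖x‖ < (Real.exp 1)⁻¹) (hy : ‖y‖ < (Real.exp 1)⁻¹) :
    ContinuousAt (fun p : ℂ × ℂ ↦ laplaceDefect p.1 p.2) (x, y) :=
  continuousOn_laplaceDefect.continuousAt
    (isOpen_ball.mem_nhds (mem_ball_zero_iff.2 (max_lt hx hy)))

lemma hasDerivAt_laplaceDefect_ray (hx : ‖x‖ < (Real.exp 1)⁻¹) (hy : ‖y‖ < (Real.exp 1)⁻¹)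
    (hxy : x ≠ y) {z : ℂ} (hz : z ≠ 0) (hz1 : ‖z‖ < 1) :
    HasDerivAt (fun z ↦ laplaceDefect (z * x) (z * y)) 0 z := by
  have hzx := norm_mul_lt_of_norm_le_one hz1.le hx
  have hzy := norm_mul_lt_of_norm_le_one hz1.le hy
  convert! (((hasDerivAt_log_treeDivDiff_ray hz hxy hzx hzy).sub
    (hasDerivAt_treeFun_ray hz hzx)).sub (hasDerivAt_treeFun_ray hz hzy)).sub
      (hasDerivAt_hurwitzLaplace_ray hx hy hz hz1) using 1
  ring

lemma laplaceDefect_eq_zero_of_ne (hx : ‖x‖ < (Real.exp 1)⁻¹) (hy : ‖y‖ < (Real.exp 1)⁻¹)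
    (hxy : x ≠ y) : laplaceDefect x y = 0 := by
  have hnorm {t : ℝ} (ht : t ∈ Set.Icc (0 : ℝ) 1) : ‖(t : ℂ)‖ ≤ 1 := by
    simpa [abs_of_nonneg ht.1] using ht.2
  have hcont : ContinuousOn (fun t : ℝ ↦ laplaceDefect (t * x) (t * y)) (Set.Icc 0 1) :=
    fun t ht ↦ (ContinuousAt.comp (f := fun t : ℝ ↦ ((t : ℂ) * x, (t : ℂ) * y))
      (continuousAt_laplaceDefect (norm_mul_lt_of_norm_le_one (hnorm ht) hx)
        (norm_mul_lt_of_norm_le_one (hnorm ht) hy)) (by fun_prop)).continuousWithinAt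
  have hderiv : ∀ t ∈ Set.Ioo (0 : ℝ) 1,
      HasDerivAt (fun t : ℝ ↦ laplaceDefect (t * x) (t * y)) 0 t := fun t ht ↦
    (hasDerivAt_laplaceDefect_ray hx hy hxy (Complex.ofReal_ne_zero.2 ht.1.ne')
      (by simpa [abs_of_pos ht.1] using ht.2)).comp_ofReal
  simpa [laplaceDefect] using
    (eq_of_hasDerivAt_zero_of_continuousOn_Icc zero_le_one hcont hderiv).symm

lemma laplaceDefect_self (hx : ‖x‖ < (Real.exp 1)⁻¹) : laplaceDefect x x = 0 := by
  have hcont : ContinuousAt (fun y ↦ laplaceDefect x y) x :=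
    (continuousAt_laplaceDefect hx hx).comp (f := fun y ↦ (x, y)) (by fun_prop)
  have hnear : ∀ᶠ y in 𝓝 x, ‖y‖ < (Real.exp 1)⁻¹ :=
    continuous_norm.continuousAt.eventually_lt_const hx
  refine tendsto_nhds_unique_of_eventuallyEq (hcont.mono_left nhdsWithin_le_nhds)
    (tendsto_const_nhds (f := 𝓝[≠] x)) ?_
  filter_upwards [hnear.filter_mono nhdsWithin_le_nhds, self_mem_nhdsWithin] with y hy hyx
  exact laplaceDefect_eq_zero_of_ne hx hy (Ne.symm hyx)

end Defect

/-- The Laplace transform of the unstable `(0,2)` Hurwitz numbers: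
for `|x1|, |x2| < 1/e`,
`Σ_{μ1,μ2 ≥ 1} (1/(μ1+μ2)) (μ1^{μ1}/μ1!) (μ2^{μ2}/μ2!) x1^{μ1} x2^{μ2}
  = log( Σ_{k≥1} (k^{k-1}/k!) (x1^k - x2^k)/(x1 - x2) )
    - Σ_{k≥1} (k^{k-1}/k!) x1^k - Σ_{k≥1} (k^{k-1}/k!) x2^k`,
where the difference quotient `(x1^k - x2^k)/(x1 - x2)` is interpreted as the
polynomial `Σ_{i=0}^{k-1} x1^i x2^{k-1-i}` (its derivative value on the diagonal). -/
theorem laplace_transform_H02 (x1 x2 : ℂ)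
    (h1 : ‖x1‖ < (Real.exp 1)⁻¹) (h2 : ‖x2‖ < (Real.exp 1)⁻¹) :
    (∑' p : ℕ × ℕ,
        (((p.1 + 1 : ℂ)) + (p.2 + 1 : ℂ))⁻¹ *
          ((p.1 + 1 : ℂ) ^ (p.1 + 1) / ((p.1 + 1)! : ℂ)) *
          ((p.2 + 1 : ℂ) ^ (p.2 + 1) / ((p.2 + 1)! : ℂ)) *
          x1 ^ (p.1 + 1) * x2 ^ (p.2 + 1)) =
      Complex.log (∑' k : ℕ, ((k + 1 : ℂ)) ^ k / ((k + 1)! : ℂ) *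
          ∑ i ∈ Finset.range (k + 1), x1 ^ i * x2 ^ (k - i))
        - (∑' k : ℕ, ((k + 1 : ℂ)) ^ k / ((k + 1)! : ℂ) * x1 ^ (k + 1))
        - (∑' k : ℕ, ((k + 1 : ℂ)) ^ k / ((k + 1)! : ℂ) * x2 ^ (k + 1)) := by
  change hurwitzLaplace x1 x2 =
    Complex.log (treeDivDiff x1 x2) - treeFun x1 - treeFun x2
  have hzero : laplaceDefect x1 x2 = 0 := by
    obtain rfl | hne := eq_or_ne x1 x2
    · exact laplaceDefect_self h1
    · exact laplaceDefect_eq_zero_of_ne h1 h2 hne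
  rw [laplaceDefect, sub_eq_zero] at hzero
  exact hzero.symm
end

section
/- Let ξ̂_n(t) be defined by ξ̂_0(t) = t-1 and ξ̂_{n+1} = t²(t-1) d/dt ξ̂_n. Then for each n ≥ 0 and |x| < 1/e, Σ_{k=1}^∞ (k^{k+n}/k!) x^k = ξ̂_n(t(x)), where t(x) = 1 + Σ_{k≥1}(k^k/k!)x^k. -/
open Polynomial
open scoped Nat

/-- The polynomials `ξ̂_n(t)` defined by `ξ̂_0(t) = t - 1` and
`ξ̂_{n+1}(t) = t²(t-1) · d/dt ξ̂_n(t)`. -/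
noncomputable def xihat : ℕ → Polynomial ℚ
  | 0 => X - 1
  | n + 1 => X ^ 2 * (X - 1) * derivative (xihat n)

/-!
Let `T_m = ∑_{k≥1} k^(k-1+m)/k! X^k` and `t = 1 + T_1`. The derivation `X · d/dX` sends `T_m` to
`T_{m+1}`, and it turns into `t²(t-1) d/dt` on polynomials in `t` as soon as `X · dt/dX = t²(t-1)`.
That equation follows by applying `X · d/dX` to `T_0 t = T_1`, which is, coefficientwise, Abel's
identity `∑_{i≥1} C(n,i) i^(i-1) (y-i)^(n-i) = n y^(n-1)` at `y = n`. For `‖x‖ < 1/e` all these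
series converge absolutely, and evaluation at `x` is an algebra homomorphism.
-/

open Finset
open scoped PowerSeries

section AbelIdentity

variable {R S : Type*} [CommRing R] [CommRing S]

/-- The left-hand side `∑_{i=1}^{n+1} C(n+1,i) i^(i-1) (y-i)^(n+1-i)` of Abel's identity. The sum is
indexed by `j = i - 1`, which avoids the truncated exponent `i - 1` at `i = 0`. -/
def abelSum (y : R) (n : ℕ) : R :=
  ∑ j ∈ range (n + 1), ((n + 1).choose (j + 1) : R) * (j + 1) ^ j * (y - (j + 1)) ^ (n - j)

theorem map_abelSum (f : R →+* S) (y : R) (n : ℕ) : f (abelSum y n) = abelSum (f y) n := by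
  simp [abelSum]

theorem abelSum_zero_succ (n : ℕ) : abelSum (0 : R) (n + 1) = 0 := by
  have hdiff : ∑ j ∈ range (n + 2),
      (-1) ^ (n + 1 - j) * ((n + 2).choose (j + 1) : R) * (j + 1) ^ (n + 1) = 0 := by
    have h := congrFun (fwdDiff_iter_pow_eq_zero_of_lt (R := R) (Nat.lt_succ_self (n + 1))) 0
    rw [fwdDiff_iter_eq_sum_shift, sum_range_succ'] at h
    simpa using h
  refine (sum_congr rfl fun j hj ↦ ?_).trans hdiff
  have hpow : (j + 1 : R) ^ (n + 1) = (j + 1) ^ j * (j + 1) ^ (n + 1 - j) := by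
    rw [← pow_add, Nat.add_sub_cancel' (mem_range_succ_iff.mp hj)]
  rw [hpow, zero_sub, neg_pow (j + 1 : R)]
  ring

theorem derivative_abelSum_X_succ (n : ℕ) :
    derivative (abelSum (X : R[X]) (n + 1)) = (n + 2 : R[X]) * abelSum X n := by
  rw [abelSum, sum_range_succ, derivative_add, derivative_sum, abelSum, mul_sum, Nat.sub_self]
  -- The summand `j = n + 1` does not involve `X`.
  refine (add_eq_left.mpr (by simp [derivative_pow])).trans (sum_congr rfl fun j hj ↦ ?_)
  have hj : j ≤ n := mem_range_succ_iff.mp hj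
  have hchoose : ((n + 2).choose (j + 1) : R[X]) * ((n - j : ℕ) + 1) =
      (n + 2 : R[X]) * (n + 1).choose (j + 1) := by
    have h := Nat.choose_mul_succ_eq (n + 1) (j + 1)
    rw [Nat.add_sub_add_right, Nat.sub_add_comm hj, mul_comm, eq_comm] at h
    exact_mod_cast congrArg (Nat.cast : ℕ → R[X]) h
  have hderiv : derivative (((n + 2).choose (j + 1) : R[X]) * (j + 1 : R[X]) ^ j *
      (X - (j + 1 : R[X])) ^ (n - j + 1)) =
        ((n + 2).choose (j + 1) : R[X]) * (j + 1 : R[X]) ^ j *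
          ((((n - j : ℕ) : R[X]) + 1) * (X - (j + 1 : R[X])) ^ (n - j)) := by
    simp [derivative_pow]
  rw [Nat.sub_add_comm hj, hderiv]
  linear_combination ((j + 1 : R[X]) ^ j * (X - (j + 1 : R[X])) ^ (n - j)) * hchoose

theorem abelSum_eq (y : R) (n : ℕ) : abelSum y n = (n + 1) * y ^ n := by
  -- Over `ℤ` a polynomial is determined by its derivative and its value at `0`.
  suffices hX : abelSum (X : ℤ[X]) n = (n + 1 : ℤ[X]) * X ^ n by
    have h := congrArg (aeval y).toRingHom hX
    rw [map_abelSum] at h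
    simpa using h
  induction n with
  | zero => simp [abelSum]
  | succ n ih =>
    have hderiv_pow : derivative (((n + 1 : ℕ) + 1 : ℤ[X]) * X ^ (n + 1)) =
        (n + 2 : ℤ[X]) * ((n + 1 : ℤ[X]) * X ^ n) := by
      simp only [derivative_mul, derivative_add, derivative_natCast, derivative_one,
        derivative_X_pow_succ, eq_intCast]
      push_cast
      ring
    have hderiv : derivative (abelSum (X : ℤ[X]) (n + 1) -
        ((n + 1 : ℕ) + 1 : ℤ[X]) * X ^ (n + 1)) = 0 := by
      rw [derivative_sub, derivative_abelSum_X_succ, ih, hderiv_pow, sub_self]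
    have hzero : evalRingHom 0 (abelSum (X : ℤ[X]) (n + 1)) = 0 := by
      rw [map_abelSum, coe_evalRingHom, eval_X, abelSum_zero_succ]
    rw [← sub_eq_zero, eq_C_of_derivative_eq_zero hderiv, coeff_zero_eq_eval_zero]
    simpa using hzero

end AbelIdentity

section EulerDerivation

/-- The derivation `X · d/dX` of power series. -/
noncomputable def eulerDerivation (R : Type*) [CommSemiring R] : Derivation R R⟦X⟧ R⟦X⟧ :=
  (PowerSeries.X : R⟦X⟧) • PowerSeries.derivative R

theorem coeff_eulerDerivation {R : Type*} [CommSemiring R] (f : R⟦X⟧) (n : ℕ) :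
    PowerSeries.coeff n (eulerDerivation R f) = n * PowerSeries.coeff n f := by
  cases n with
  | zero => simp [eulerDerivation]
  | succ n =>
    simp [eulerDerivation, PowerSeries.coeff_succ_X_mul, PowerSeries.coeff_derivative, mul_comm]

theorem iterate_derivation_sub_one_eq_aeval_xihat {A : Type*} [CommRing A] [Algebra ℚ A]
    (D : Derivation ℚ A A) {t : A} (ht : D t = t ^ 2 * (t - 1)) (n : ℕ) :
    D^[n] (t - 1) = aeval t (xihat n) := by
  induction n with
  | zero => simp [xihat]
  | succ n ih =>
    rw [Function.iterate_succ_apply', ih, D.map_aeval, ht, xihat]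
    simp [mul_comm]

end EulerDerivation

section TreeSeries

/-- The series `∑_{k≥1} k^(k-1+m)/k! X^k`. For `m = 0` it is the tree function `T`, the solution of
`T = X e^T`; for `m = n + 1` it is the series of the theorem for `ξ̂_n`, so that `t = 1 + T_1`. The
coefficients are shifted by one because `k - 1` would be truncated at `k = 0`. -/
noncomputable def treeSeries (m : ℕ) : ℚ⟦X⟧ :=
  PowerSeries.X * PowerSeries.mk fun k ↦ (k + 1 : ℚ) ^ (k + m) / (k + 1)!

theorem constantCoeff_treeSeries (m : ℕ) : PowerSeries.constantCoeff (treeSeries m) = 0 := by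
  simp [treeSeries]

theorem coeff_succ_treeSeries (m k : ℕ) :
    PowerSeries.coeff (k + 1) (treeSeries m) = (k + 1 : ℚ) ^ (k + m) / (k + 1)! := by
  rw [treeSeries, PowerSeries.coeff_succ_X_mul, PowerSeries.coeff_mk]

theorem eulerDerivation_treeSeries (m : ℕ) :
    eulerDerivation ℚ (treeSeries m) = treeSeries (m + 1) := by
  ext k
  cases k with
  | zero => simp [coeff_eulerDerivation, constantCoeff_treeSeries]
  | succ k =>
    rw [coeff_eulerDerivation, coeff_succ_treeSeries, coeff_succ_treeSeries]
    push_cast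
    ring

theorem coeff_one_add_treeSeries_one (k : ℕ) :
    PowerSeries.coeff k (1 + treeSeries 1) = (k : ℚ) ^ k / k ! := by
  cases k with
  | zero => simp [constantCoeff_treeSeries]
  | succ k => simp [coeff_succ_treeSeries, PowerSeries.coeff_one]

theorem treeSeries_zero_mul_one_add_treeSeries_one :
    treeSeries 0 * (1 + treeSeries 1) = treeSeries 1 := by
  ext n
  cases n with
  | zero => simp [constantCoeff_treeSeries]
  | succ n =>
    have habel := abelSum_eq (n + 1 : ℚ) n
    rw [coeff_succ_treeSeries, eq_div_iff (by positivity), pow_succ', ← habel, abelSum, treeSeries,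
      mul_assoc, PowerSeries.coeff_succ_X_mul, PowerSeries.coeff_mul,
      Nat.sum_antidiagonal_eq_sum_range_succ_mk, sum_mul]
    refine sum_congr rfl fun j hj ↦ ?_
    have hj : j ≤ n := mem_range_succ_iff.mp hj
    rw [PowerSeries.coeff_mk, coeff_one_add_treeSeries_one, Nat.cast_choose ℚ (by lia),
      Nat.add_sub_add_right, Nat.cast_sub hj]
    field_simp
    ring

theorem eulerDerivation_one_add_treeSeries_one :
    eulerDerivation ℚ (1 + treeSeries 1) = (1 + treeSeries 1) ^ 2 * (1 + treeSeries 1 - 1) := by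
  have hmul := treeSeries_zero_mul_one_add_treeSeries_one
  have hderiv := congrArg (eulerDerivation ℚ) hmul
  simp only [Derivation.leibniz, map_add, Derivation.map_one_eq_zero, zero_add, smul_eq_mul,
    eulerDerivation_treeSeries] at hderiv ⊢
  linear_combination treeSeries 2 * hmul - (1 + treeSeries 1) * hderiv

theorem treeSeries_succ_eq_aeval_xihat (n : ℕ) :
    treeSeries (n + 1) = aeval (1 + treeSeries 1) (xihat n) := by
  rw [← iterate_derivation_sub_one_eq_aeval_xihat _ eulerDerivation_one_add_treeSeries_one,
    add_sub_cancel_left]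
  induction n with
  | zero => rfl
  | succ n ih => rw [Function.iterate_succ_apply', ← ih, eulerDerivation_treeSeries]

end TreeSeries

section Evaluation

variable {R A : Type*} [CommSemiring R]

theorem coeff_mul_smul_pow [Semiring A] [Algebra R A] (f g : R⟦X⟧) (x : A) (n : ℕ) :
    PowerSeries.coeff n (f * g) • x ^ n = ∑ p ∈ antidiagonal n,
      (PowerSeries.coeff p.1 f • x ^ p.1) * (PowerSeries.coeff p.2 g • x ^ p.2) := by
  rw [PowerSeries.coeff_mul, sum_smul]
  refine sum_congr rfl fun p hp ↦ ?_
  rw [smul_mul_smul_comm, ← pow_add, mem_antidiagonal.mp hp]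

theorem hasSum_coeff_algebraMap_smul_pow [Semiring A] [TopologicalSpace A] [Algebra R A]
    (r : R) (x : A) :
    HasSum (fun k ↦ PowerSeries.coeff k (algebraMap R R⟦X⟧ r) • x ^ k) (algebraMap R A r) := by
  convert hasSum_single (f := fun k ↦ PowerSeries.coeff k (algebraMap R R⟦X⟧ r) • x ^ k) 0
    fun k hk ↦ ?_
  · simp [Algebra.algebraMap_eq_smul_one]
  · simp [PowerSeries.coeff_C, hk]

variable [NormedRing A] [Algebra R A]

variable (R) in
/-- The power series over `R` that converge absolutely at the point `x` of a normed `R`-algebra. -/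
def absConvergent (x : A) : Subalgebra R R⟦X⟧ where
  carrier := {f | Summable fun k ↦ ‖PowerSeries.coeff k f • x ^ k‖}
  mul_mem' {f g} hf hg := by
    simpa only [Set.mem_ofPred_eq, coeff_mul_smul_pow] using
      summable_norm_sum_mul_antidiagonal_of_summable_norm hf hg
  add_mem' {f g} hf hg := by
    refine (hf.add hg).of_nonneg_of_le (fun _ ↦ norm_nonneg _) fun k ↦ ?_
    rw [map_add, add_smul]
    exact norm_add_le _ _
  algebraMap_mem' r := by
    refine summable_of_ne_finset_zero (s := {0}) fun k hk ↦ ?_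
    simp [PowerSeries.coeff_C, notMem_singleton.mp hk]

variable [CompleteSpace A]

theorem summable_coeff_smul_pow {x : A} (f : absConvergent R x) :
    Summable fun k ↦ PowerSeries.coeff k (f : R⟦X⟧) • x ^ k :=
  f.2.of_norm

variable (R) in
/-- The value at `x` of the power series converging absolutely there, as an algebra
homomorphism. -/
noncomputable def evalAbsConvergent (x : A) : absConvergent R x →ₐ[R] A where
  toFun f := ∑' k, PowerSeries.coeff k (f : R⟦X⟧) • x ^ k
  map_one' := by
    simpa only [map_one, OneMemClass.coe_one] using
      (hasSum_coeff_algebraMap_smul_pow (1 : R) x).tsum_eq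
  map_mul' f g := by
    simp only [MulMemClass.coe_mul, coeff_mul_smul_pow]
    exact (tsum_mul_tsum_eq_tsum_sum_antidiagonal_of_summable_norm f.2 g.2).symm
  map_zero' := by simp
  map_add' f g := by
    simp only [AddMemClass.coe_add, map_add, add_smul]
    exact (summable_coeff_smul_pow f).tsum_add (summable_coeff_smul_pow g)
  commutes' r := (hasSum_coeff_algebraMap_smul_pow r x).tsum_eq

theorem evalAbsConvergent_of_constantCoeff_eq_zero {x : A} {f : absConvergent R x}
    (hf : PowerSeries.constantCoeff (f : R⟦X⟧) = 0) :
    evalAbsConvergent R x f = ∑' k, PowerSeries.coeff (k + 1) (f : R⟦X⟧) • x ^ (k + 1) := by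
  refine (summable_coeff_smul_pow f).tsum_eq_zero_add.trans ?_
  rw [PowerSeries.coeff_zero_eq_constantCoeff_apply, hf, zero_smul, zero_add]

end Evaluation

section Convergence

theorem norm_coeff_treeSeries_le (m k : ℕ) :
    ‖PowerSeries.coeff k (treeSeries m)‖ ≤ k ^ m * Real.exp 1 ^ k := by
  cases k with
  | zero => simp [constantCoeff_treeSeries]
  | succ k =>
    rw [coeff_succ_treeSeries, ← Rat.norm_cast_real, Real.norm_of_nonneg (by positivity),
      ← Real.exp_nat_mul, mul_one]
    push_cast
    calc (k + 1 : ℝ) ^ (k + m) / (k + 1)!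
        ≤ (k + 1 : ℝ) ^ (k + 1 + m) / (k + 1)! := by
          gcongr
          · linarith [k.cast_nonneg (α := ℝ)]
          · exact k.le_succ
      _ = (k + 1 : ℝ) ^ m * ((k + 1) ^ (k + 1) / (k + 1)!) := by ring
      _ ≤ (k + 1 : ℝ) ^ m * Real.exp (k + 1) := by
          gcongr
          exact Real.pow_div_factorial_le_exp _ (by positivity) _

variable {A : Type*} [NormedRing A] [NormedAlgebra ℚ A] {x : A}

theorem treeSeries_mem_absConvergent (hx : ‖x‖ < (Real.exp 1)⁻¹) (m : ℕ) :
    treeSeries m ∈ absConvergent ℚ x := by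
  have hratio : ‖Real.exp 1 * ‖x‖‖ < 1 := by
    rw [Real.norm_of_nonneg (by positivity)]
    exact (lt_inv_mul_iff₀ (Real.exp_pos 1)).mp (by simpa using hx)
  refine (summable_pow_mul_geometric_of_norm_lt_one m hratio).of_nonneg_of_le
    (fun _ ↦ norm_nonneg _) fun k ↦ ?_
  rcases k.eq_zero_or_pos with rfl | hk
  · simp [constantCoeff_treeSeries]
  calc ‖PowerSeries.coeff k (treeSeries m) • x ^ k‖
      ≤ ‖PowerSeries.coeff k (treeSeries m)‖ * ‖x ^ k‖ := norm_smul_le _ _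
    _ ≤ (k ^ m * Real.exp 1 ^ k) * ‖x‖ ^ k := by
        gcongr
        · exact norm_coeff_treeSeries_le m k
        · exact norm_pow_le' x hk
    _ = k ^ m * (Real.exp 1 * ‖x‖) ^ k := by rw [mul_pow, mul_assoc]

theorem laplace_transform_is_xihat_general [CompleteSpace A] (n : ℕ)
    (hx : ‖x‖ < (Real.exp 1)⁻¹) :
    ∑' k : ℕ, ((k + 1 : ℚ) ^ (k + 1 + n) / (k + 1)!) • x ^ (k + 1) =
      aeval (1 + ∑' k : ℕ, ((k + 1 : ℚ) ^ (k + 1) / (k + 1)!) • x ^ (k + 1)) (xihat n) := by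
  let T (m : ℕ) : absConvergent ℚ x := ⟨treeSeries m, treeSeries_mem_absConvergent hx m⟩
  have hformal : T (n + 1) = aeval (1 + T 1) (xihat n) := Subtype.ext <| by
    rw [aeval_subalgebra_coe]
    exact treeSeries_succ_eq_aeval_xihat n
  have heval (m : ℕ) : evalAbsConvergent ℚ x (T (m + 1)) =
      ∑' k : ℕ, ((k + 1 : ℚ) ^ (k + 1 + m) / (k + 1)!) • x ^ (k + 1) := by
    rw [evalAbsConvergent_of_constantCoeff_eq_zero (constantCoeff_treeSeries (m + 1))]
    simp only [T, coeff_succ_treeSeries, add_assoc, add_comm 1 m]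
  have hzero := heval 0
  simp only [add_zero, zero_add] at hzero
  rw [← heval, ← hzero, hformal, ← aeval_algHom_apply, map_add, map_one]

end Convergence

/-- For each `n ≥ 0` and `|x| < 1/e`,
`Σ_{k≥1} (k^{k+n}/k!) x^k = ξ̂_n(t(x))` where `t(x) = 1 + Σ_{k≥1} (k^k/k!) x^k`. -/
theorem laplace_transform_is_xihat (n : ℕ) (x : ℂ) (hx : ‖x‖ < (Real.exp 1)⁻¹) :
    (∑' k : ℕ, ((k + 1 : ℂ)) ^ (k + 1 + n) / ((k + 1)! : ℂ) * x ^ (k + 1)) =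
      Polynomial.aeval
        (1 + ∑' k : ℕ, ((k + 1 : ℂ)) ^ (k + 1) / ((k + 1)! : ℂ) * x ^ (k + 1))
        (xihat n) := by
  simpa [Rat.smul_def] using laplace_transform_is_xihat_general n hx
end
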